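/- As h → 0 with ε = ε(h) → 0 and ε(h)/√h → ∞, one has E( X̃_h²·1_{|X̃_h| ≤ ε} ) = σ²h + A(ε,h)·h + R(h), where the remainder decomposes as R(h) = O(h³·ε^{−Y−2}) + O(h²·ε^{2−2Y}) + O(h^{1/2}·ε·e^{−ε²/(2σ²h)}) + O(h^{1/2}·ε^{3−Y}·e^{−ε²/(8σ²h)}) (a sum of four functions, each big-O of the indicated rate). -/

import Mathlib

open MeasureTheory ProbabilityTheory Filter Asymptotics Set
open scoped Topology NNReal ENNReal Real

noncomputable section

/-- The Lévy density `s(x) = (C₊·1_{x>0} + C₋·1_{x<0})·q(x)·|x|^{−1−Y}`. -/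
def levyDensity (Y Cp Cm : ℝ) (q : ℝ → ℝ) (x : ℝ) : ℝ :=
  (if 0 < x then Cp else if x < 0 then Cm else 0) * q x * |x| ^ (-1 - Y)

/-- The Lévy measure `ν(dx) = s(x) dx`. -/
def levyMeasure (Y Cp Cm : ℝ) (q : ℝ → ℝ) : Measure ℝ :=
  volume.withDensity fun x => ENNReal.ofReal (levyDensity Y Cp Cm q x)

/-- The Lévy exponent `ψ_J(u) = ibu + ∫ (e^{iux} − 1 − iux·1_{|x|≤1}) ν(dx)`. -/
def psiJ (b Y Cp Cm : ℝ) (q : ℝ → ℝ) (u : ℝ) : ℂ :=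
  Complex.I * b * u +
    ∫ x : ℝ,
      (Complex.exp (Complex.I * u * x) - 1 - (if |x| ≤ 1 then Complex.I * u * x else 0))
      ∂(levyMeasure Y Cp Cm q)

/-- The scale parameter `ς = ((C₊+C₋)Γ(−Y)|cos(πY/2)|)^{1/Y}`. -/
def varsigma (Y Cp Cm : ℝ) : ℝ :=
  ((Cp + Cm) * Real.Gamma (-Y) * |Real.cos (π * Y / 2)|) ^ (1 / Y)

/-- The stable part of the Lévy exponent:
`ς^Y |u|^Y (1 − iβ·sgn(u)·tan(πY/2))` with `β = (C₊−C₋)/(C₊+C₋)`. -/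
def stablePart (Y Cp Cm : ℝ) (u : ℝ) : ℂ :=
  (varsigma Y Cp Cm ^ Y * |u| ^ Y : ℝ) *
    (1 - Complex.I * ((Cp - Cm) / (Cp + Cm)) * Real.sign u * Real.tan (π * Y / 2))

/-- Characteristic function of `X̃_h`, the time-`h` marginal of a Brownian motion with
variance `σ²` plus an independent strictly `Y`-stable process. -/
def tildeCF (σ Y Cp Cm : ℝ) (h u : ℝ) : ℂ :=
  Complex.exp (-(σ ^ 2 * u ^ 2 * h / 2) - h * stablePart Y Cp Cm u)


/-- The centering term `A(ε,h)`. -/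
def Afun (Y Cp Cm σ : ℝ) (ε h : ℝ) : ℝ :=
  (Cp + Cm) / (2 - Y) * ε ^ (2 - Y)
    - (Cp + Cm) * ((Y + 1) * (Y + 2) / (2 * Y)) * σ ^ 2 * h * ε ^ (-Y)

namespace TSM

/-- point of modulus `v` and argument `α` -/
def pol (v α : ℝ) : ℂ := v * Complex.exp (α * Complex.I)

lemma pol_re (v α : ℝ) : (pol v α).re = v * Real.cos α := by
  simp [pol, Complex.exp_re]

lemma pol_im (v α : ℝ) : (pol v α).im = v * Real.sin α := by
  simp [pol, Complex.exp_im]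

lemma norm_pol {v : ℝ} (hv : 0 < v) (α : ℝ) : ‖pol v α‖ = v := by
  simp [pol, Complex.norm_exp_ofReal_mul_I, abs_of_pos hv]

lemma pol_zero (v : ℝ) : pol v 0 = v := by simp [pol]

lemma pol_cpow {v α : ℝ} (hv : 0 < v) (h1 : -(π/2) < α) (h2 : α < π/2) (s : ℝ) :
    (pol v α) ^ (s : ℂ) = (v ^ s : ℝ) * Complex.exp (α * s * Complex.I) := by
  have hne : Complex.exp (α * Complex.I) ≠ 0 := Complex.exp_ne_zero _
  have hv' : (v : ℂ) ≠ 0 := by exact_mod_cast hv.ne'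
  have hp := Real.pi_pos
  have hlog : Complex.log (pol v α) = Real.log v + α * Complex.I := by
    have : pol v α = Complex.exp (Real.log v + α * Complex.I) := by
      rw [Complex.exp_add, ← Complex.ofReal_exp, Real.exp_log hv]; rfl
    rw [this, Complex.log_exp]
    · simp; linarith
    · simp; linarith
  have hpne : pol v α ≠ 0 := mul_ne_zero hv' hne
  rw [Complex.cpow_def_of_ne_zero hpne, hlog, Real.rpow_def_of_pos hv, Complex.ofReal_exp,
    ← Complex.exp_add]
  congr 1; push_cast; ring

lemma integral_exp_subst (g : ℝ → ℂ) :
    ∫ v in Ioi (0:ℝ), g v = ∫ t : ℝ, (Real.exp t : ℂ) * g (Real.exp t) := by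
  have := integral_image_eq_integral_abs_deriv_smul (s := univ) (f := Real.exp) (f' := Real.exp)
    MeasurableSet.univ (fun x _ => (Real.hasDerivAt_exp x).hasDerivWithinAt)
    Real.exp_injective.injOn g
  rw [image_univ, Real.range_exp] at this
  rw [this]; simp [abs_of_pos (Real.exp_pos _)]

lemma integrable_exp_subst (g : ℝ → ℂ) :
    IntegrableOn g (Ioi (0:ℝ)) ↔ Integrable (fun t : ℝ => (Real.exp t : ℂ) * g (Real.exp t)) := by
  have := integrableOn_image_iff_integrableOn_abs_deriv_smul (s := univ) (f := Real.exp)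
    (f' := Real.exp)
    MeasurableSet.univ (fun x _ => (Real.hasDerivAt_exp x).hasDerivWithinAt)
    Real.exp_injective.injOn g
  rw [image_univ, Real.range_exp] at this
  rw [this]; simp [abs_of_pos (Real.exp_pos _)]

/-- integrability from two power bounds -/
lemma integrableOn_of_bounds {F : ℝ → ℂ} {M p q : ℝ} (hF : ContinuousOn F (Ioi 0))
    (hp : -1 < p) (hq : q < -1)
    (hb1 : ∀ v, 0 < v → ‖F v‖ ≤ M * v ^ p) (hb2 : ∀ v, 0 < v → ‖F v‖ ≤ M * v ^ q) :
    IntegrableOn F (Ioi 0) := by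
  rw [← Ioc_union_Ioi_eq_Ioi (zero_le_one' ℝ)]
  refine IntegrableOn.union ?_ ?_
  · refine Integrable.mono' (g := fun v => M * v ^ p) ?_ ?_ ?_
    · have := (intervalIntegral.intervalIntegrable_rpow' (a := 0) (b := 1) hp).const_mul M
      rwa [intervalIntegrable_iff_integrableOn_Ioc_of_le zero_le_one] at this
    · exact (hF.mono Ioc_subset_Ioi_self).aestronglyMeasurable measurableSet_Ioc
    · exact (ae_restrict_iff' measurableSet_Ioc).2 (ae_of_all _ fun v hv => hb1 v hv.1)
  · refine Integrable.mono' (g := fun v => M * v ^ q) ?_ ?_ ?_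
    · exact (integrableOn_Ioi_rpow_of_lt hq one_pos).const_mul M
    · exact (hF.mono (Ioi_subset_Ioi zero_le_one)).aestronglyMeasurable measurableSet_Ioi
    · exact (ae_restrict_iff' measurableSet_Ioi).2
        (ae_of_all _ fun v hv => hb2 v (lt_trans one_pos hv))

lemma rotation {F : ℂ → ℂ} {M p q θ : ℝ} (hF : DifferentiableOn ℂ F {u | 0 < u.re})
    (hp : -1 < p) (hq : q < -1) (h1 : -(π/2) < θ) (h2 : θ < π/2)
    (hb1 : ∀ v, 0 < v → ∀ α ∈ uIcc 0 θ, ‖F (pol v α)‖ ≤ M * v ^ p)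
    (hb2 : ∀ v, 0 < v → ∀ α ∈ uIcc 0 θ, ‖F (pol v α)‖ ≤ M * v ^ q) :
    IntegrableOn (fun v : ℝ => F v) (Ioi 0) ∧
    IntegrableOn (fun v : ℝ => Complex.exp (θ * Complex.I) * F (pol v θ)) (Ioi 0) ∧
    ∫ v in Ioi (0:ℝ), F v = ∫ v in Ioi (0:ℝ), Complex.exp (θ * Complex.I) * F (pol v θ) := by
  have hang : ∀ α ∈ uIcc 0 θ, 0 < Real.cos α := by
    intro α hα
    have hpi := Real.pi_pos
    rcases mem_uIcc.1 hα with h | h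
    · exact Real.cos_pos_of_mem_Ioo ⟨by linarith [h.1], by linarith [h.2]⟩
    · exact Real.cos_pos_of_mem_Ioo ⟨by linarith [h.1], by linarith [h.2]⟩
  have hcont : ∀ α ∈ uIcc 0 θ, ContinuousOn (fun v : ℝ => F (pol v α)) (Ioi 0) := by
    intro α hα
    refine hF.continuousOn.comp (by unfold pol; fun_prop) ?_
    intro v hv
    simp only [mem_ofPred_eq, pol_re]
    exact mul_pos hv (hang α hα)
  have hInt0 : ∀ α ∈ uIcc 0 θ, IntegrableOn (fun v : ℝ => F (pol v α)) (Ioi 0) := fun α hα =>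
    integrableOn_of_bounds (hcont α hα) hp hq (fun v hv => hb1 v hv α hα)
      (fun v hv => hb2 v hv α hα)
  have hi0 : IntegrableOn (fun v : ℝ => F v) (Ioi 0) := by
    simpa [pol_zero] using hInt0 0 left_mem_uIcc
  have hiθ : IntegrableOn (fun v : ℝ => Complex.exp (θ * Complex.I) * F (pol v θ)) (Ioi 0) :=
    (hInt0 θ right_mem_uIcc).const_mul _
  refine ⟨hi0, hiθ, ?_⟩
  set H : ℂ → ℂ := fun w => Complex.exp w * F (Complex.exp w) with hH
  have hexp : ∀ t α : ℝ, Complex.exp (t + α * Complex.I) = pol (Real.exp t) α := by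
    intro t α; rw [Complex.exp_add]; simp [pol]
  have e0 : ∀ t : ℝ, (Real.exp t : ℂ) * F (Real.exp t) = H (t + (0:ℝ) * Complex.I) := by
    intro t; simp [hH]
  have eθ : ∀ t : ℝ, (Real.exp t : ℂ) * (Complex.exp (θ * Complex.I) * F (pol (Real.exp t) θ))
      = H (t + θ * Complex.I) := by
    intro t; simp only [hH]; rw [hexp, ← mul_assoc]; rfl
  rw [integral_exp_subst, integral_exp_subst]
  rw [integrable_exp_subst] at hi0 hiθ
  simp only [e0, eθ] at hi0 hiθ ⊢
  have hdiff : ∀ T : ℝ, DifferentiableOn ℂ H (uIcc (-T) T ×ℂ uIcc 0 θ) := by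
    intro T w hw
    have hw2 : w.im ∈ uIcc 0 θ := hw.2
    have : 0 < (Complex.exp w).re := by
      rw [Complex.exp_re]; exact mul_pos (Real.exp_pos _) (hang _ hw2)
    have hd : DifferentiableAt ℂ F (Complex.exp w) :=
      hF.differentiableAt ((isOpen_lt continuous_const Complex.continuous_re).mem_nhds this)
    exact (Complex.differentiableAt_exp.mul
      (hd.comp w Complex.differentiableAt_exp)).differentiableWithinAt
  have hrect : ∀ T : ℝ, (∫ x in (-T)..T, H (x + (0:ℝ) * Complex.I))
      - (∫ x in (-T)..T, H (x + θ * Complex.I))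
      + Complex.I • (∫ y in (0:ℝ)..θ, H (T + y * Complex.I))
      - Complex.I • (∫ y in (0:ℝ)..θ, H ((-T : ℝ) + y * Complex.I)) = 0 := by
    intro T
    have := Complex.integral_boundary_rect_eq_zero_of_differentiableOn H (-T : ℝ)
      (T + θ * Complex.I) (by simpa using hdiff T)
    simpa using this
  have hnormH : ∀ t : ℝ, ∀ α ∈ uIcc 0 θ, ∀ r, ‖F (pol (Real.exp t) α)‖ ≤ M * (Real.exp t) ^ r →
      ‖H (t + α * Complex.I)‖ ≤ M * Real.exp ((1 + r) * t) := by
    intro t α hα r hr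
    simp only [hH]
    rw [norm_mul, hexp, norm_pol (Real.exp_pos t)]
    calc _ ≤ Real.exp t * (M * (Real.exp t) ^ r) := by gcongr
      _ = _ := by
        rw [← Real.exp_mul, add_mul, Real.exp_add, one_mul, mul_comm r t]; ring
  have hlimT : Tendsto (fun T : ℝ => ∫ y in (0:ℝ)..θ, H (T + y * Complex.I)) atTop (𝓝 0) := by
    have hb : ∀ T : ℝ, ‖∫ y in (0:ℝ)..θ, H (T + y * Complex.I)‖
        ≤ M * Real.exp ((1 + q) * T) * |θ - 0| := fun T =>
      intervalIntegral.norm_integral_le_of_norm_le_const fun y hy =>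
        hnormH T y (uIoc_subset_uIcc hy) q (hb2 _ (Real.exp_pos _) _ (uIoc_subset_uIcc hy))
    refine squeeze_zero_norm hb ?_
    have h0 : Tendsto (fun T : ℝ => (1 + q) * T) atTop atBot :=
      tendsto_id.const_mul_atTop_of_neg (by linarith)
    simpa using ((Real.tendsto_exp_atBot.comp h0).const_mul M).mul_const (|θ - 0|)
  have hlimB : Tendsto (fun T : ℝ => ∫ y in (0:ℝ)..θ, H ((-T : ℝ) + y * Complex.I)) atTop
      (𝓝 0) := by
    have hb : ∀ T : ℝ, ‖∫ y in (0:ℝ)..θ, H ((-T : ℝ) + y * Complex.I)‖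
        ≤ M * Real.exp ((1 + p) * (-T)) * |θ - 0| := fun T =>
      intervalIntegral.norm_integral_le_of_norm_le_const fun y hy =>
        hnormH (-T) y (uIoc_subset_uIcc hy) p (hb1 _ (Real.exp_pos _) _ (uIoc_subset_uIcc hy))
    refine squeeze_zero_norm hb ?_
    have h0 : Tendsto (fun T : ℝ => (1 + p) * (-T)) atTop atBot :=
      tendsto_neg_atTop_atBot.const_mul_atBot (by linarith)
    simpa using ((Real.tendsto_exp_atBot.comp h0).const_mul M).mul_const (|θ - 0|)
  have hA := intervalIntegral_tendsto_integral hi0 tendsto_neg_atTop_atBot tendsto_id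
  have hB := intervalIntegral_tendsto_integral hiθ tendsto_neg_atTop_atBot tendsto_id
  have hall := ((hA.sub hB).add (hlimT.const_smul Complex.I)).sub (hlimB.const_smul Complex.I)
  have hz : (fun T : ℝ => (∫ x in (-T)..T, H (x + (0:ℝ) * Complex.I))
      - (∫ x in (-T)..T, H (x + θ * Complex.I))
      + Complex.I • (∫ y in (0:ℝ)..θ, H (T + y * Complex.I))
      - Complex.I • (∫ y in (0:ℝ)..θ, H ((-T : ℝ) + y * Complex.I))) = fun _ => 0 := by
    funext T; exact hrect T
  simp only [id] at hall
  rw [hz] at hall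
  have := tendsto_nhds_unique hall tendsto_const_nhds
  simp only [smul_zero, add_zero, sub_zero] at this
  exact sub_eq_zero.1 this

/-- powers times exponentials are bounded -/
lemma exists_rpow_exp_bound (s κ r : ℝ) (hs : 0 ≤ s) (hκ : 0 < κ) (hr : 0 < r) :
    ∃ M, 0 < M ∧ ∀ v : ℝ, 0 < v → v ^ s * Real.exp (-κ * v ^ r) ≤ M := by
  obtain ⟨n, hn⟩ := exists_nat_ge (s / r)
  refine ⟨1 + n.factorial / κ ^ n, by positivity, fun v hv => ?_⟩
  have hvr : 0 < v ^ r := Real.rpow_pos_of_pos hv r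
  have h1 : v ^ s ≤ 1 + (v ^ r) ^ n := by
    rcases le_total v 1 with h | h
    · have := Real.rpow_le_one hv.le h hs
      have : 0 < (v ^ r) ^ n := by positivity
      linarith
    · have : v ^ s ≤ (v ^ r) ^ n := by
        rw [← Real.rpow_natCast, ← Real.rpow_mul hv.le]
        apply Real.rpow_le_rpow_of_exponent_le h
        rw [div_le_iff₀ hr] at hn; linarith
      linarith
  have h2 : (v ^ r) ^ n * Real.exp (-κ * v ^ r) ≤ n.factorial / κ ^ n := by
    have := Real.pow_div_factorial_le_exp (κ * v ^ r) (by positivity) n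
    rw [neg_mul, Real.exp_neg, ← div_eq_mul_inv, div_le_div_iff₀ (Real.exp_pos _) (by positivity)]
    rw [mul_pow, div_le_iff₀ (by positivity)] at this
    linarith
  have h3 : Real.exp (-κ * v ^ r) ≤ 1 := by
    rw [Real.exp_le_one_iff, neg_mul]; have := mul_pos hκ hvr; linarith
  calc v ^ s * Real.exp (-κ * v ^ r) ≤ (1 + (v ^ r) ^ n) * Real.exp (-κ * v ^ r) := by gcongr
    _ ≤ _ := by rw [add_mul, one_mul]; linarith

/-- rotated Gamma integral -/
lemma gamma_rot {s z δ : ℝ} (hs : 0 < s) (hz : 0 < z) (h1 : -(π/2) < δ) (h2 : δ < π/2) :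
    IntegrableOn (fun v : ℝ => Complex.exp (δ * Complex.I) *
      (pol v δ ^ ((s - 1 : ℝ) : ℂ) * Complex.exp (-(z * pol v δ)))) (Ioi 0) ∧
    ∫ v in Ioi (0:ℝ), Complex.exp (δ * Complex.I) *
      (pol v δ ^ ((s - 1 : ℝ) : ℂ) * Complex.exp (-(z * pol v δ)))
    = ((z ^ (-s) * Real.Gamma s : ℝ) : ℂ) := by
  have hcδ : 0 < Real.cos δ := Real.cos_pos_of_mem_Ioo ⟨h1, h2⟩
  obtain ⟨M, hM0, hM⟩ := exists_rpow_exp_bound (s + 1) (z * Real.cos δ) 1 (by linarith)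
    (by positivity) one_pos
  have hnorm : ∀ v : ℝ, 0 < v → ∀ α ∈ uIcc 0 δ,
      ‖(pol v α) ^ ((s - 1 : ℝ) : ℂ) * Complex.exp (-(z * pol v α))‖
        ≤ v ^ (s - 1) * Real.exp (-(z * Real.cos δ) * v ^ (1:ℝ)) := by
    intro v hv α hα
    rw [norm_mul, Complex.norm_cpow_real, norm_pol hv, Complex.norm_exp]
    have hc : Real.cos δ ≤ Real.cos α := by
      have hpi := Real.pi_pos
      rw [← Real.cos_abs δ, ← Real.cos_abs α]
      apply Real.cos_le_cos_of_nonneg_of_le_pi (abs_nonneg _)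
      · exact abs_le.2 ⟨by linarith, by linarith⟩
      · rcases mem_uIcc.1 hα with h | h
        · rw [abs_of_nonneg h.1, abs_of_nonneg (h.1.trans h.2)]; exact h.2
        · rw [abs_of_nonpos h.2, abs_of_nonpos (h.1.trans h.2)]; linarith [h.1]
    gcongr
    simp only [Complex.neg_re, Complex.re_ofReal_mul, pol_re, Real.rpow_one]
    have : z * v * Real.cos δ ≤ z * v * Real.cos α := by gcongr
    nlinarith
  have hrot := rotation (F := fun u => u ^ ((s - 1 : ℝ) : ℂ) * Complex.exp (-(z * u)))
    (M := 1 + M) (p := s - 1) (q := -2) (θ := δ) ?_ (by linarith) (by norm_num) h1 h2 ?_ ?_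
  · obtain ⟨-, hi, he⟩ := hrot
    refine ⟨hi, ?_⟩
    rw [← he]
    have := Complex.integral_cpow_mul_exp_neg_mul_Ioi (a := (s:ℂ)) (r := z) (by simpa using hs) hz
    push_cast
    rw [this, Complex.Gamma_ofReal, Complex.ofReal_cpow hz.le]
    congr 1
    rw [one_div, Complex.ofReal_neg, Complex.inv_cpow _ _ ?_, Complex.cpow_neg]
    rw [Complex.arg_ofReal_of_nonneg hz.le]; exact Real.pi_pos.ne
  · intro u hu
    have : u ∈ Complex.slitPlane := Or.inl hu
    exact ((differentiableAt_id.cpow_const this).mul (by fun_prop)).differentiableWithinAt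
  · intro v hv α hα
    refine (hnorm v hv α hα).trans ?_
    have h3 : Real.exp (-(z * Real.cos δ) * v ^ (1:ℝ)) ≤ 1 := by
      rw [Real.exp_le_one_iff, neg_mul, Real.rpow_one]
      have : 0 < z * Real.cos δ * v := by positivity
      linarith
    have : 0 < v ^ (s - 1) := Real.rpow_pos_of_pos hv _
    nlinarith
  · intro v hv α hα
    refine (hnorm v hv α hα).trans ?_
    have e : v ^ (s - 1) = v ^ (s + 1) * v ^ (-2 : ℝ) := by
      rw [← Real.rpow_add hv]; ring_nf
    have h4 := hM v hv
    have : 0 < v ^ (-2 : ℝ) := Real.rpow_pos_of_pos hv _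
    rw [e]
    calc _ = (v ^ (s + 1) * Real.exp (-(z * Real.cos δ) * v ^ (1:ℝ))) * v ^ (-2:ℝ) := by ring
      _ ≤ M * v ^ (-2:ℝ) := by gcongr
      _ ≤ _ := by gcongr; linarith

end TSM

namespace TSM
open Complex (I)

/-- the oscillating part of the truncated transform -/
def B0 (u : ℂ) : ℂ := Complex.exp (I * u) * (-I / u + 2 / u ^ 2 + 2 * I / u ^ 3)
/-- `∫₀¹ z² e^{iuz} dz` -/
def Bf (u : ℂ) : ℂ := B0 u - 2 * I / u ^ 3

lemma gamma_rot2 {s z θ : ℝ} (hs : 0 < s) (hz : 0 < z) (h1 : 0 < θ) (h2 : θ < π/2) :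
    IntegrableOn (fun v : ℝ => Complex.exp (θ * I) *
      (pol v θ ^ ((s - 1 : ℝ) : ℂ) * Complex.exp (I * pol v θ * z))) (Ioi 0) ∧
    ∫ v in Ioi (0:ℝ), Complex.exp (θ * I) *
      (pol v θ ^ ((s - 1 : ℝ) : ℂ) * Complex.exp (I * pol v θ * z))
    = ((z ^ (-s) * Real.Gamma s : ℝ) : ℂ) * Complex.exp (π * s / 2 * I) := by
  have hpi := Real.pi_pos
  obtain ⟨hi, he⟩ := gamma_rot (δ := θ - π/2) hs hz (by linarith) (by linarith)
  have key : ∀ v ∈ Ioi (0:ℝ), Complex.exp (θ * I) *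
      (pol v θ ^ ((s - 1 : ℝ) : ℂ) * Complex.exp (I * pol v θ * z)) =
      (Complex.exp ((θ - π/2 : ℝ) * Complex.I) *
      (pol v (θ - π/2) ^ ((s - 1 : ℝ) : ℂ) * Complex.exp (-(z * pol v (θ - π/2))))) *
        Complex.exp (π * s / 2 * I) := by
    intro v hv
    have hv : 0 < v := hv
    rw [pol_cpow hv (by linarith) (by linarith), pol_cpow hv (by linarith) (by linarith)]
    have e1 : -(z * pol v (θ - π/2)) = I * pol v θ * z := by
      unfold pol
      push_cast
      rw [sub_mul, Complex.exp_sub, Complex.exp_pi_div_two_mul_I]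
      field_simp
      rw [Complex.I_sq]; ring
    rw [e1]
    have e2 : Complex.exp (θ * I) * Complex.exp (θ * ((s - 1 : ℝ) : ℂ) * I) =
       Complex.exp ((θ - π/2 : ℝ) * I) * Complex.exp ((θ - π/2 : ℝ) * ((s - 1 : ℝ) : ℂ) * I) *
        Complex.exp (π * s / 2 * I) := by
      rw [← Complex.exp_add, ← Complex.exp_add, ← Complex.exp_add]
      congr 1; push_cast; ring
    linear_combination ((v ^ (s - 1) : ℝ) : ℂ) * Complex.exp (I * pol v θ * z) * e2
  refine ⟨(integrableOn_congr_fun key measurableSet_Ioi).2 (hi.mul_const _), ?_⟩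
  rw [setIntegral_congr_fun measurableSet_Ioi key, integral_mul_const, he]

lemma Bf_eq_integral {u : ℂ} (hu : u ≠ 0) :
    ∫ z in (0:ℝ)..1, (z:ℂ) ^ 2 * Complex.exp (I * u * z) = Bf u := by
  have hI := Complex.I_ne_zero
  have hd : ∀ z ∈ uIcc (0:ℝ) 1, HasDerivAt (fun z : ℝ => Complex.exp (I * u * z) *
      (-I * z ^ 2 / u + 2 * z / u ^ 2 + 2 * I / u ^ 3)) ((z:ℂ) ^ 2 * Complex.exp (I * u * z)) z := by
    intro z _
    have hz : HasDerivAt (fun z : ℝ => (z:ℂ)) 1 z := Complex.ofRealCLM.hasDerivAt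
    have h1 := (hz.const_mul (I * u)).cexp
    have h2 := ((((hz.pow 2).const_mul (-I)).div_const u).add ((hz.const_mul 2).div_const (u^2))).add_const
      (2 * I / u ^ 3)
    refine (h1.mul h2).congr_deriv ?_
    simp only [Pi.add_apply, Pi.pow_apply]
    field_simp
    ring_nf
    simp only [Complex.I_sq]
    ring
  rw [intervalIntegral.integral_eq_sub_of_hasDerivAt hd
    (Continuous.intervalIntegrable (by fun_prop) _ _)]
  simp [Bf, B0]

lemma norm_exp_I_mul (u : ℂ) : ‖Complex.exp (I * u)‖ = Real.exp (-u.im) := by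
  rw [Complex.norm_exp]; simp

lemma norm_Bf_le {u : ℂ} (hu : u ≠ 0) (him : 0 ≤ u.im) : ‖Bf u‖ ≤ 1 := by
  rw [← Bf_eq_integral hu]
  have := intervalIntegral.norm_integral_le_of_norm_le_const (a := 0) (b := 1) (C := 1)
    (f := fun z : ℝ => (z:ℂ) ^ 2 * Complex.exp (I * u * z)) ?_
  · simpa using this
  · intro z hz
    rw [uIoc_of_le zero_le_one] at hz
    have : I * u * z = I * (u * z) := by ring
    rw [norm_mul, this, norm_exp_I_mul, norm_pow, Complex.norm_real, Real.norm_eq_abs,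
      abs_of_pos hz.1]
    have h1 : z ^ 2 ≤ 1 := pow_le_one₀ hz.1.le hz.2
    have h2 : Real.exp (-(u * z).im) ≤ 1 := by
      rw [Real.exp_le_one_iff]; simp; exact mul_nonneg him hz.1.le
    calc z ^ 2 * Real.exp (-(u * z).im) ≤ 1 * 1 := by gcongr
      _ = 1 := by norm_num

lemma norm_B0_le {v : ℝ} (hv : 0 < v) (α : ℝ) :
    ‖B0 (pol v α)‖ ≤ Real.exp (-(v * Real.sin α)) * (1 / v + 2 / v ^ 2 + 2 / v ^ 3) := by
  unfold B0
  rw [norm_mul, norm_exp_I_mul, pol_im]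
  gcongr
  refine (norm_add₃_le).trans ?_
  simp [norm_pol hv]

lemma norm_B0_le' {v α : ℝ} (hv : 0 < v) (hα : 0 ≤ Real.sin α) :
    ‖B0 (pol v α)‖ ≤ 1 + 2 / v ^ 3 := by
  have hne : pol v α ≠ 0 := by rw [← norm_pos_iff, norm_pol hv]; exact hv
  have : B0 (pol v α) = Bf (pol v α) + 2 * I / (pol v α) ^ 3 := by simp [Bf]
  rw [this]
  refine (norm_add_le _ _).trans ?_
  gcongr
  · exact norm_Bf_le hne (by rw [pol_im]; positivity)
  · simp [norm_pol hv]

lemma norm_exp_remainder {w : ℂ} (hw : 0 ≤ w.re) :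
    ‖Complex.exp (-w) - 1 + w‖ ≤ 3 * ‖w‖ ^ 2 := by
  rcases le_total ‖w‖ 1 with h | h
  · have := Complex.norm_exp_sub_one_sub_id_le (x := -w) (by simpa using h)
    rw [norm_neg, sub_neg_eq_add] at this
    nlinarith [sq_nonneg ‖w‖]
  · have h1 : ‖Complex.exp (-w)‖ ≤ 1 := by
      rw [Complex.norm_exp, Real.exp_le_one_iff]; simpa using hw
    calc ‖Complex.exp (-w) - 1 + w‖ ≤ ‖Complex.exp (-w)‖ + ‖(1:ℂ)‖ + ‖w‖ :=
          (norm_add_le _ _).trans (by gcongr; exact norm_sub_le _ _)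
      _ ≤ 1 + 1 + ‖w‖ := by simp only [norm_one]; gcongr
      _ ≤ _ := by nlinarith

lemma norm_exp_sub_one_le' {w : ℂ} (hw : 0 ≤ w.re) :
    ‖Complex.exp (-w) - 1‖ ≤ 2 * ‖w‖ := by
  rcases le_total ‖w‖ 1 with h | h
  · have := Complex.norm_exp_sub_one_le (x := -w) (by simpa using h)
    simpa using this
  · have h1 : ‖Complex.exp (-w)‖ ≤ 1 := by
      rw [Complex.norm_exp, Real.exp_le_one_iff]; simpa using hw
    calc ‖Complex.exp (-w) - 1‖ ≤ ‖Complex.exp (-w)‖ + ‖(1:ℂ)‖ := norm_sub_le _ _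
      _ ≤ 1 + 1 := by simp only [norm_one]; gcongr
      _ ≤ _ := by linarith

lemma norm_exp_sub_one_le_two {w : ℂ} (hw : 0 ≤ w.re) :
    ‖Complex.exp (-w) - 1‖ ≤ 2 := by
  have h1 : ‖Complex.exp (-w)‖ ≤ 1 := by
    rw [Complex.norm_exp, Real.exp_le_one_iff]; simpa using hw
  calc ‖Complex.exp (-w) - 1‖ ≤ ‖Complex.exp (-w)‖ + ‖(1:ℂ)‖ := norm_sub_le _ _
    _ ≤ 1 + 1 := by simp only [norm_one]; gcongr
    _ ≤ _ := by norm_num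

lemma main_int_one {Y θ : ℝ} (hY1 : 1 < Y) (hY2 : Y < 2) (h1 : 0 < θ) (h2 : θ < π/2) :
    IntegrableOn (fun v : ℝ => Complex.exp (θ * I) * (Bf (pol v θ) * pol v θ ^ (Y : ℂ))) (Ioi 0) ∧
    ∫ v in Ioi (0:ℝ), Complex.exp (θ * I) * (Bf (pol v θ) * pol v θ ^ (Y : ℂ))
      = ((Real.Gamma (Y + 1) / (2 - Y) : ℝ) : ℂ) * Complex.exp (π * (Y + 1) / 2 * I) := by
  have hpi := Real.pi_pos
  have hsin : 0 < Real.sin θ := Real.sin_pos_of_pos_of_lt_pi h1 (by linarith)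
  have hcos : 0 < Real.cos θ := Real.cos_pos_of_mem_Ioo ⟨by linarith, h2⟩
  set k : ℝ → ℝ → ℂ := fun v z => Complex.exp (θ * I) *
      (pol v θ ^ (Y : ℂ) * ((z:ℂ) ^ 2 * Complex.exp (I * pol v θ * z))) with hk
  have hg : ∀ z, 0 < z → IntegrableOn (fun v => k v z) (Ioi 0) ∧
      ∫ v in Ioi (0:ℝ), k v z = ((z ^ (1 - Y) * Real.Gamma (Y + 1) : ℝ) : ℂ)
        * Complex.exp (π * (Y + 1) / 2 * I) := by
    intro z hz
    obtain ⟨hi, he⟩ := gamma_rot2 (s := Y + 1) (by linarith) hz h1 h2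
    simp only [add_sub_cancel_right] at hi he
    have e : ∀ v, k v z = (z:ℂ) ^ 2 * (Complex.exp (θ * I) *
      (pol v θ ^ (Y : ℂ) * Complex.exp (I * pol v θ * z))) := fun v => by simp only [hk]; ring
    simp only [e]
    refine ⟨hi.const_mul _, ?_⟩
    rw [integral_const_mul, he]
    have : z ^ (1 - Y) = z ^ 2 * z ^ (-(Y + 1)) := by
      rw [← Real.rpow_natCast, ← Real.rpow_add hz]; congr 1; push_cast; ring
    rw [this]; push_cast; ring
  have hnorm : ∀ z, 0 < z → ∀ v, 0 < v → ‖k v z‖ =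
      z ^ 2 * (v ^ ((Y + 1) - 1) * Real.exp (-((z * Real.sin θ) * v))) := by
    intro z hz v hv
    have e : I * pol v θ * z = I * (pol v θ * z) := by ring
    simp only [hk]
    rw [norm_mul, norm_mul, norm_mul, Complex.norm_exp_ofReal_mul_I, Complex.norm_cpow_real,
      norm_pol hv, e, norm_exp_I_mul, norm_pow, Complex.norm_real, Real.norm_eq_abs, sq_abs]
    simp only [Complex.mul_im, Complex.ofReal_re, Complex.ofReal_im, pol_im]
    simp
    ring_nf
  have hmeas : AEStronglyMeasurable (Function.uncurry k)
      ((volume.restrict (Ioi 0)).prod (volume.restrict (Ioc 0 1))) := by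
    rw [Measure.prod_restrict]
    refine ContinuousOn.aestronglyMeasurable ?_ (measurableSet_Ioi.prod measurableSet_Ioc)
    have hc : Continuous (fun x : ℝ × ℝ => pol x.1 θ) := by unfold pol; fun_prop
    refine ContinuousOn.mul continuousOn_const (ContinuousOn.mul ?_ (by fun_prop))
    refine hc.continuousOn.cpow_const ?_
    rintro ⟨v, z⟩ ⟨hv, -⟩
    left; rw [pol_re]; exact mul_pos hv hcos
  have hInt0 : Integrable (Function.uncurry k)
      ((volume.restrict (Ioi 0)).prod (volume.restrict (Ioc 0 1))) := by
    rw [integrable_prod_iff' hmeas]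
    refine ⟨(ae_restrict_iff' measurableSet_Ioc).2 (ae_of_all _ fun z hz => (hg z hz.1).1), ?_⟩
    have e : ∀ z ∈ Ioc (0:ℝ) 1, ∫ v in Ioi (0:ℝ), ‖Function.uncurry k (v, z)‖ =
        ((Real.sin θ) ^ (-(Y+1)) * Real.Gamma (Y + 1)) * z ^ (1 - Y) := by
      intro z hz
      have hz0 : 0 < z := hz.1
      simp only [Function.uncurry]
      rw [setIntegral_congr_fun measurableSet_Ioi (g := fun v : ℝ =>
        z ^ 2 * (v ^ ((Y + 1) - 1) * Real.exp (-((z * Real.sin θ) * v))))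
        (fun v hv => hnorm z hz.1 v hv), integral_const_mul,
        Real.integral_rpow_mul_exp_neg_mul_Ioi (by linarith) (by positivity)]
      have : z ^ (1 - Y) = z ^ 2 * z ^ (-(Y + 1)) := by
        rw [← Real.rpow_natCast, ← Real.rpow_add hz0]; congr 1; push_cast; ring
      rw [this, one_div, Real.inv_rpow (by positivity), ← Real.rpow_neg (by positivity),
        Real.mul_rpow hz0.le hsin.le]; ring
    have hi := ((intervalIntegral.intervalIntegrable_rpow' (a := 0) (b := 1)
      (r := 1 - Y) (by linarith)).const_mul ((Real.sin θ) ^ (-(Y+1)) * Real.Gamma (Y + 1)))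
    rw [intervalIntegrable_iff_integrableOn_Ioc_of_le zero_le_one] at hi
    exact (integrableOn_congr_fun e measurableSet_Ioc).2 hi
  have hB : ∀ v ∈ Ioi (0:ℝ), ∫ z in Ioc (0:ℝ) 1, k v z =
      Complex.exp (θ * I) * (Bf (pol v θ) * pol v θ ^ (Y : ℂ)) := by
    intro v hv
    have hne : pol v θ ≠ 0 := by rw [← norm_pos_iff, norm_pol hv]; exact hv
    simp only [hk]
    rw [integral_const_mul, integral_const_mul, ← intervalIntegral.integral_of_le zero_le_one,
      Bf_eq_integral hne]; ring
  constructor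
  · exact (integrableOn_congr_fun hB measurableSet_Ioi).1 hInt0.integral_prod_left
  · rw [← setIntegral_congr_fun measurableSet_Ioi hB, integral_integral_swap hInt0,
      setIntegral_congr_fun measurableSet_Ioc (fun z hz => (hg z hz.1).2), integral_mul_const]
    congr 1
    rw [integral_complex_ofReal, integral_mul_const, ← intervalIntegral.integral_of_le zero_le_one,
      integral_rpow (Or.inl (by linarith))]
    congr 1
    rw [Real.one_rpow, Real.zero_rpow (by linarith)]
    have : 1 - Y + 1 = 2 - Y := by ring
    rw [this]; ring

lemma main_int_two {Y θ : ℝ} (hY1 : 1 < Y) (h1 : 0 < θ) (h2 : θ < π/2) :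
    IntegrableOn (fun v : ℝ => Complex.exp (θ * I) *
      (B0 (pol v θ) * (pol v θ ^ (Y : ℂ) * pol v θ ^ 2))) (Ioi 0) ∧
    ∫ v in Ioi (0:ℝ), Complex.exp (θ * I) * (B0 (pol v θ) * (pol v θ ^ (Y : ℂ) * pol v θ ^ 2))
      = ((Real.Gamma Y * (Y + 1) * (Y + 2) : ℝ) : ℂ) * (I * Complex.exp (π * Y / 2 * I)) := by
  obtain ⟨hi1, he1⟩ := gamma_rot2 (s := Y + 2) (by linarith) one_pos h1 h2
  obtain ⟨hi2, he2⟩ := gamma_rot2 (s := Y + 1) (by linarith) one_pos h1 h2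
  obtain ⟨hi3, he3⟩ := gamma_rot2 (s := Y) (by linarith) one_pos h1 h2
  have key : ∀ v ∈ Ioi (0:ℝ),
      Complex.exp (θ * I) * (B0 (pol v θ) * (pol v θ ^ (Y : ℂ) * pol v θ ^ 2)) =
      (-I) * (Complex.exp (θ * I) *
      (pol v θ ^ ((Y + 2 - 1 : ℝ) : ℂ) * Complex.exp (I * pol v θ * (1:ℝ)))) +
      2 * (Complex.exp (θ * I) *
      (pol v θ ^ ((Y + 1 - 1 : ℝ) : ℂ) * Complex.exp (I * pol v θ * (1:ℝ)))) +
      2 * I * (Complex.exp (θ * I) *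
      (pol v θ ^ ((Y - 1 : ℝ) : ℂ) * Complex.exp (I * pol v θ * (1:ℝ)))) := by
    intro v hv
    have hne : pol v θ ≠ 0 := by rw [← norm_pos_iff, norm_pol hv]; exact hv
    have a1 : pol v θ ^ ((Y + 2 - 1 : ℝ) : ℂ) = pol v θ ^ (Y : ℂ) * pol v θ := by
      have : ((Y + 2 - 1 : ℝ) : ℂ) = Y + 1 := by push_cast; ring
      rw [this, Complex.cpow_add _ _ hne, Complex.cpow_one]
    have a2 : pol v θ ^ ((Y + 1 - 1 : ℝ) : ℂ) = pol v θ ^ (Y : ℂ) := by simp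
    have a3 : pol v θ ^ ((Y - 1 : ℝ) : ℂ) = pol v θ ^ (Y : ℂ) / pol v θ := by
      push_cast; rw [Complex.cpow_sub _ _ hne, Complex.cpow_one]
    rw [a1, a2, a3]
    simp only [B0, Complex.ofReal_one, mul_one]
    field_simp
  have hi : IntegrableOn _ (Ioi (0:ℝ)) :=
    (((hi1.const_mul (-I)).add (hi2.const_mul 2)).add (hi3.const_mul (2 * I)))
  refine ⟨(integrableOn_congr_fun key measurableSet_Ioi).2 hi, ?_⟩
  rw [setIntegral_congr_fun measurableSet_Ioi key, integral_add, integral_add,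
    integral_const_mul (-I), integral_const_mul 2, integral_const_mul (2 * I), he1, he2, he3]
  · have g1 : Real.Gamma (Y + 1) = Y * Real.Gamma Y := Real.Gamma_add_one (by linarith)
    have g2 : Real.Gamma (Y + 2) = (Y + 1) * (Y * Real.Gamma Y) := by
      rw [← g1, ← Real.Gamma_add_one (by linarith)]; congr 1; ring
    rw [g1, g2]
    have x1 : Complex.exp (π * ((Y + 1 : ℝ) : ℂ) / 2 * I) = Complex.exp (π * Y / 2 * I) * I := by
      have h0 := Complex.exp_pi_div_two_mul_I
      calc _ = Complex.exp (π * Y / 2 * I + π / 2 * I) := by congr 1; push_cast; ring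
        _ = _ := by rw [Complex.exp_add, h0]
    have x2 : Complex.exp (π * ((Y + 2 : ℝ) : ℂ) / 2 * I) = -Complex.exp (π * Y / 2 * I) := by
      rw [← mul_neg_one, ← Complex.exp_pi_mul_I, ← Complex.exp_add]; congr 1; push_cast; ring
    rw [x1, x2]
    simp only [Real.one_rpow]
    push_cast
    ring
  · exact hi1.const_mul (-I)
  · exact hi2.const_mul 2
  · exact (hi1.const_mul (-I)).add (hi2.const_mul 2)
  · exact hi3.const_mul (2 * I)

end TSM

namespace TSM
open Complex (I)

lemma pol_ne_zero {v : ℝ} (hv : 0 < v) (α : ℝ) : pol v α ≠ 0 := by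
  rw [← norm_pos_iff, norm_pol hv]; exact hv

lemma integrable_env {s r : ℝ} (hs : 0 < s) (hr : 0 < r) :
    IntegrableOn (fun v : ℝ => Real.exp (-(v * r)) * (1 / v + 2 / v ^ 2 + 2 / v ^ 3) * v ^ (s + 2))
      (Ioi 0) := by
  have h : ∀ t : ℝ, -1 < t → IntegrableOn (fun v : ℝ => v ^ t * Real.exp (-r * v)) (Ioi 0) := by
    intro t ht
    simpa using integrableOn_rpow_mul_exp_neg_mul_rpow (p := 1) ht one_pos hr
  have hi := ((h (s + 1) (by linarith)).add ((h s (by linarith)).const_mul 2)).add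
    ((h (s - 1) (by linarith)).const_mul 2)
  refine (integrableOn_congr_fun ?_ measurableSet_Ioi).1 hi
  intro v hv
  have hv : 0 < v := hv
  have e1 : v ^ (s + 1) = v ^ (s - 1) * v ^ 2 := by
    rw [← Real.rpow_natCast, ← Real.rpow_add hv]; congr 1; push_cast; ring
  have e2 : v ^ s = v ^ (s - 1) * v := by
    nth_rewrite 3 [← Real.rpow_one v]
    rw [← Real.rpow_add hv]; congr 1; ring
  have e3 : v ^ (s + 2) = v ^ (s - 1) * v ^ 3 := by
    rw [← Real.rpow_natCast, ← Real.rpow_add hv]; congr 1; push_cast; ring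
  simp only [Pi.add_apply]
  rw [e1, e2, e3]
  have : -(v * r) = -r * v := by ring
  rw [this]
  field_simp

lemma pol_sq_re (v α : ℝ) : (pol v α ^ 2).re = v ^ 2 * Real.cos (2 * α) := by
  have : pol v α ^ 2 = pol (v ^ 2) (2 * α) := by
    unfold pol; rw [mul_pow, ← Complex.exp_nat_mul]; push_cast; ring_nf
  rw [this, pol_re]

lemma cos_two_ge {α : ℝ} (h1 : 0 ≤ α) (h2 : α ≤ π / 6) : 1 / 2 ≤ Real.cos (2 * α) := by
  rw [← Real.cos_pi_div_three]
  have := Real.pi_pos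
  exact Real.cos_le_cos_of_nonneg_of_le_pi (by linarith) (by linarith) (by linarith)

lemma gauss_re_nonneg {τ v α : ℝ} (hτ : 0 < τ) (h1 : 0 ≤ α) (h2 : α ≤ π / 6) :
    0 ≤ ((τ / 2 : ℝ) * pol v α ^ 2 : ℂ).re := by
  rw [Complex.re_ofReal_mul, pol_sq_re]
  have := cos_two_ge h1 h2
  have : 0 ≤ Real.cos (2 * α) := by linarith
  positivity

lemma norm_gauss_le {τ v α : ℝ} (hτ : 0 < τ) (h1 : 0 ≤ α) (h2 : α ≤ π / 6) :
    ‖Complex.exp (-((τ / 2 : ℝ) * pol v α ^ 2))‖ ≤ Real.exp (-(τ / 4) * v ^ (2:ℝ)) := by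
  rw [Complex.norm_exp]
  gcongr
  rw [Complex.neg_re, Complex.re_ofReal_mul, pol_sq_re, Real.rpow_two]
  have h := cos_two_ge h1 h2
  have : τ / 2 * (v ^ 2 * (1 / 2)) ≤ τ / 2 * (v ^ 2 * Real.cos (2 * α)) := by gcongr
  linarith

lemma norm_gauss_le_one {τ v α : ℝ} (hτ : 0 < τ) (h1 : 0 ≤ α) (h2 : α ≤ π / 6) :
    ‖Complex.exp (-((τ / 2 : ℝ) * pol v α ^ 2))‖ ≤ 1 := by
  rw [Complex.norm_exp, Real.exp_le_one_iff, Complex.neg_re]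
  linarith [gauss_re_nonneg (v := v) hτ h1 h2]

lemma diffB0 {u : ℂ} (hu : u ≠ 0) : DifferentiableAt ℂ B0 u := by
  unfold B0
  have h2 : u ^ 2 ≠ 0 := pow_ne_zero _ hu
  have h3 : u ^ 3 ≠ 0 := pow_ne_zero _ hu
  fun_prop (disch := assumption)

lemma diffBf {u : ℂ} (hu : u ≠ 0) : DifferentiableAt ℂ Bf u := by
  unfold Bf
  have h3 : u ^ 3 ≠ 0 := pow_ne_zero _ hu
  have := diffB0 hu
  fun_prop (disch := assumption)

lemma ne_zero_of_re {u : ℂ} (hu : 0 < u.re) : u ≠ 0 := by rintro rfl; simp at hu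

lemma diff_cpow {u : ℂ} (hu : 0 < u.re) (Y : ℝ) : DifferentiableAt ℂ (fun u : ℂ => u ^ (Y:ℂ)) u :=
  differentiableAt_id.cpow_const (Or.inl hu)

/-- second order remainder integrand -/
def F2 (Y τ l : ℝ) (c : ℂ) (u : ℂ) : ℂ :=
  B0 u * Complex.exp (-((τ / 2 : ℝ) * u ^ 2)) *
    (Complex.exp (-(l * (c * u ^ (Y:ℂ)))) - 1 + l * (c * u ^ (Y:ℂ)))

lemma stable_re_nonneg {Y θ l v α : ℝ} {c : ℂ} (hθ2 : θ ≤ π / 6) (hl : 0 < l)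
    (hc : ∀ α ∈ Icc 0 θ, 0 ≤ (c * Complex.exp (α * Y * I)).re) (hv : 0 < v) (hα : α ∈ Icc 0 θ) :
    0 ≤ (l * (c * pol v α ^ (Y:ℂ)) : ℂ).re := by
  have hpi := Real.pi_pos
  rw [pol_cpow hv (by linarith [hα.1]) (by linarith [hα.2])]
  have e : c * ((v ^ Y : ℝ) * Complex.exp (α * Y * I)) =
    (v ^ Y : ℝ) * (c * Complex.exp (α * Y * I)) := by ring
  rw [e, Complex.re_ofReal_mul, Complex.re_ofReal_mul]
  have := hc α hα
  have := Real.rpow_pos_of_pos hv Y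
  positivity

lemma F2_norm {Y θ l v α : ℝ} {c : ℂ} (hθ2 : θ ≤ π / 6) (hl : 0 < l)
    (hc : ∀ α ∈ Icc 0 θ, 0 ≤ (c * Complex.exp (α * Y * I)).re) (hv : 0 < v) (hα : α ∈ Icc 0 θ) :
    ‖Complex.exp (-(l * (c * pol v α ^ (Y:ℂ)))) - 1 + l * (c * pol v α ^ (Y:ℂ))‖
      ≤ 3 * (l ^ 2 * ‖c‖ ^ 2) * v ^ (2 * Y) := by
  refine (norm_exp_remainder (stable_re_nonneg hθ2 hl hc hv hα)).trans (le_of_eq ?_)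
  rw [norm_mul, norm_mul, Complex.norm_cpow_real, norm_pol hv, Complex.norm_real, Real.norm_eq_abs,
    abs_of_pos hl]
  have : v ^ (2 * Y) = (v ^ Y) ^ 2 := by
    rw [← Real.rpow_natCast, ← Real.rpow_mul hv.le]; congr 1; push_cast; ring
  rw [this]; ring

lemma F2_lemma {Y θ : ℝ} {c : ℂ} (hY1 : 1 < Y) (hθ1 : 0 < θ) (hθ2 : θ ≤ π / 6)
    (hc : ∀ α ∈ Icc 0 θ, 0 ≤ (c * Complex.exp (α * Y * I)).re) :
    ∃ K, 0 ≤ K ∧ ∀ τ l : ℝ, 0 < τ → 0 < l →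
      IntegrableOn (fun v : ℝ => F2 Y τ l c v) (Ioi 0) ∧
      ‖∫ v in Ioi (0:ℝ), F2 Y τ l c v‖ ≤ K * l ^ 2 := by
  have hpi := Real.pi_pos
  have hsin : ∀ α ∈ Icc 0 θ, 0 ≤ Real.sin α := fun α hα =>
    Real.sin_nonneg_of_nonneg_of_le_pi hα.1 (by linarith [hα.2])
  have hsinθ : 0 < Real.sin θ := Real.sin_pos_of_pos_of_lt_pi hθ1 (by linarith)
  set env : ℝ → ℝ := fun v =>
    Real.exp (-(v * Real.sin θ)) * (1 / v + 2 / v ^ 2 + 2 / v ^ 3) * v ^ ((2 * Y - 2) + 2)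
    with henv
  have hienv : IntegrableOn env (Ioi 0) := integrable_env (by linarith) hsinθ
  refine ⟨3 * ‖c‖ ^ 2 * ∫ v in Ioi (0:ℝ), env v, ?_, ?_⟩
  · refine mul_nonneg (by positivity) (setIntegral_nonneg measurableSet_Ioi fun v hv => ?_)
    have hv : 0 < v := hv
    simp only [henv]; positivity
  intro τ l hτ hl
  obtain ⟨Ma, hMa0, hMa⟩ := exists_rpow_exp_bound 3 (τ / 4) 2 (by norm_num) (by linarith) two_pos
  obtain ⟨Mb, hMb0, hMb⟩ := exists_rpow_exp_bound (2 * Y + 2) (τ / 4) 2 (by linarith)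
    (by linarith) two_pos
  obtain ⟨Mc, hMc0, hMc⟩ := exists_rpow_exp_bound (2 * Y - 1) (τ / 4) 2 (by linarith)
    (by linarith) two_pos
  have hn : ∀ v, 0 < v → ∀ α ∈ uIcc 0 θ, ‖F2 Y τ l c (pol v α)‖ ≤
      (1 + 2 / v ^ 3) * Real.exp (-(τ / 4) * v ^ (2:ℝ)) * (3 * (l ^ 2 * ‖c‖ ^ 2) * v ^ (2 * Y)) := by
    intro v hv α hα
    rw [uIcc_of_le hθ1.le] at hα
    unfold F2
    rw [norm_mul, norm_mul]
    gcongr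
    · exact norm_B0_le' hv (hsin α hα)
    · exact norm_gauss_le hτ hα.1 (hα.2.trans hθ2)
    · exact F2_norm hθ2 hl hc hv hα
  have hrot := rotation (F := F2 Y τ l c) (M := (3 * (l ^ 2 * ‖c‖ ^ 2)) * (Ma + 2 + Mb + 2 * Mc))
    (p := 2 * Y - 3) (q := -2) (θ := θ) ?_ (by linarith) (by norm_num) (by linarith) (by linarith)
    ?_ ?_
  · obtain ⟨hi, -, he⟩ := hrot
    refine ⟨hi, ?_⟩
    rw [he]
    have hb : ∀ v ∈ Ioi (0:ℝ), ‖Complex.exp (θ * I) * F2 Y τ l c (pol v θ)‖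
        ≤ (3 * ‖c‖ ^ 2 * l ^ 2) * env v := by
      intro v hv
      have hv : 0 < v := hv
      rw [norm_mul, Complex.norm_exp_ofReal_mul_I, one_mul]
      unfold F2
      rw [norm_mul, norm_mul]
      calc _ ≤ (Real.exp (-(v * Real.sin θ)) * (1 / v + 2 / v ^ 2 + 2 / v ^ 3)) * 1 *
            (3 * (l ^ 2 * ‖c‖ ^ 2) * v ^ (2 * Y)) := by
            gcongr
            · exact norm_B0_le hv θ
            · exact norm_gauss_le_one hτ hθ1.le hθ2
            · exact F2_norm hθ2 hl hc hv (right_mem_Icc.2 hθ1.le)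
        _ = _ := by simp only [henv]; rw [sub_add_cancel]; ring
    refine (norm_integral_le_of_norm_le (hienv.const_mul _)
      ((ae_restrict_iff' measurableSet_Ioi).2 (ae_of_all _ hb))).trans (le_of_eq ?_)
    rw [integral_const_mul]; ring
  · intro u hu
    have hu' := ne_zero_of_re hu
    have := diffB0 hu'
    have := diff_cpow hu Y
    unfold F2
    apply DifferentiableAt.differentiableWithinAt
    fun_prop
  · intro v hv α hα
    refine (hn v hv α hα).trans ?_
    have e : v ^ (2 * Y) = v ^ 3 * v ^ (2 * Y - 3) := by
      rw [← Real.rpow_natCast, ← Real.rpow_add hv]; congr 1; push_cast; ring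
    have a := hMa v hv
    rw [show (3:ℝ) = ((3:ℕ):ℝ) by norm_num, Real.rpow_natCast] at a
    have b : Real.exp (-(τ / 4) * v ^ (2:ℝ)) ≤ 1 := by
      rw [Real.exp_le_one_iff, neg_mul]; have : 0 ≤ τ / 4 * v ^ (2:ℝ) := by positivity
      linarith
    calc _ = (3 * (l ^ 2 * ‖c‖ ^ 2)) * (v ^ 3 * Real.exp (-(τ / 4) * v ^ (2:ℝ)) +
            2 * Real.exp (-(τ / 4) * v ^ (2:ℝ))) * v ^ (2 * Y - 3) := by
          rw [e]; field_simp
      _ ≤ (3 * (l ^ 2 * ‖c‖ ^ 2)) * (Ma + 2 + Mb + 2 * Mc) * v ^ (2 * Y - 3) := by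
          have : v ^ 3 * Real.exp (-(τ / 4) * v ^ (2:ℝ)) + 2 * Real.exp (-(τ / 4) * v ^ (2:ℝ))
            ≤ Ma + 2 + Mb + 2 * Mc := by linarith
          gcongr
  · intro v hv α hα
    refine (hn v hv α hα).trans ?_
    have e1 : v ^ (2 * Y) = v ^ (2 * Y + 2) * v ^ (-2:ℝ) := by
      rw [← Real.rpow_add hv]; congr 1; ring
    have e2 : v ^ (2 * Y) / v ^ 3 = v ^ (2 * Y - 1) * v ^ (-2:ℝ) := by
      rw [← Real.rpow_add hv, ← Real.rpow_natCast, ← Real.rpow_sub hv]; congr 1; push_cast; ring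
    have b := hMb v hv
    have c' := hMc v hv
    calc _ = (3 * (l ^ 2 * ‖c‖ ^ 2)) * Real.exp (-(τ / 4) * v ^ (2:ℝ)) *
          (v ^ (2 * Y) + 2 * (v ^ (2 * Y) / v ^ 3)) := by ring
      _ = (3 * (l ^ 2 * ‖c‖ ^ 2)) * (v ^ (2 * Y + 2) * Real.exp (-(τ / 4) * v ^ (2:ℝ)) +
            2 * (v ^ (2 * Y - 1) * Real.exp (-(τ / 4) * v ^ (2:ℝ)))) * v ^ (-2:ℝ) := by
          rw [e2, e1]; ring
      _ ≤ (3 * (l ^ 2 * ‖c‖ ^ 2)) * (Ma + 2 + Mb + 2 * Mc) * v ^ (-2:ℝ) := by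
          gcongr; linarith

/-- first order integrand -/
def F1 (Y τ : ℝ) (u : ℂ) : ℂ := Bf u * Complex.exp (-((τ / 2 : ℝ) * u ^ 2)) * u ^ (Y:ℂ)

/-- auxiliary integrand with real values on the half-line -/
def FJ (Y τ : ℝ) (u : ℂ) : ℂ :=
  (Complex.exp (-((τ / 2 : ℝ) * u ^ 2)) - 1) * u ^ (Y:ℂ) / u ^ 3

lemma F1_rot {Y θ τ : ℝ} (hY1 : 1 < Y) (hθ1 : 0 < θ) (hθ2 : θ ≤ π / 6) (hτ : 0 < τ) :
    IntegrableOn (fun v : ℝ => F1 Y τ v) (Ioi 0) ∧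
    ∫ v in Ioi (0:ℝ), F1 Y τ v = ∫ v in Ioi (0:ℝ), Complex.exp (θ * I) * F1 Y τ (pol v θ) := by
  have hpi := Real.pi_pos
  obtain ⟨Ma, hMa0, hMa⟩ := exists_rpow_exp_bound (Y + 2) (τ / 4) 2 (by linarith)
    (by linarith) two_pos
  have hn : ∀ v, 0 < v → ∀ α ∈ uIcc 0 θ, ‖F1 Y τ (pol v α)‖ ≤
      1 * Real.exp (-(τ / 4) * v ^ (2:ℝ)) * v ^ Y := by
    intro v hv α hα
    rw [uIcc_of_le hθ1.le] at hα
    unfold F1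
    rw [norm_mul, norm_mul, Complex.norm_cpow_real, norm_pol hv]
    gcongr
    · refine norm_Bf_le (pol_ne_zero hv α) ?_
      rw [pol_im]
      exact mul_nonneg hv.le (Real.sin_nonneg_of_nonneg_of_le_pi hα.1 (by linarith [hα.2]))
    · exact norm_gauss_le hτ hα.1 (hα.2.trans hθ2)
  have hrot := rotation (F := F1 Y τ) (M := 1 + Ma)
    (p := Y) (q := -2) (θ := θ) ?_ (by linarith) (by norm_num) (by linarith) (by linarith)
    ?_ ?_
  · exact ⟨hrot.1, hrot.2.2⟩
  · intro u hu
    have hu' := ne_zero_of_re hu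
    have := diffBf hu'
    have := diff_cpow hu Y
    unfold F1
    apply DifferentiableAt.differentiableWithinAt
    fun_prop
  · intro v hv α hα
    refine (hn v hv α hα).trans ?_
    have b : Real.exp (-(τ / 4) * v ^ (2:ℝ)) ≤ 1 := by
      rw [Real.exp_le_one_iff, neg_mul]; have : 0 ≤ τ / 4 * v ^ (2:ℝ) := by positivity
      linarith
    gcongr; linarith
  · intro v hv α hα
    refine (hn v hv α hα).trans ?_
    have e1 : v ^ Y = v ^ (Y + 2) * v ^ (-2:ℝ) := by
      rw [← Real.rpow_add hv]; congr 1; ring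
    calc _ = (v ^ (Y + 2) * Real.exp (-(τ / 4) * v ^ (2:ℝ))) * v ^ (-2:ℝ) := by rw [e1]; ring
      _ ≤ _ := by gcongr; linarith [hMa v hv]

lemma FJ_rot {Y θ τ : ℝ} (hY1 : 1 < Y) (hY2 : Y < 2) (hθ1 : 0 < θ) (hθ2 : θ ≤ π / 6)
    (hτ : 0 < τ) :
    IntegrableOn (fun v : ℝ => Complex.exp (θ * I) * FJ Y τ (pol v θ)) (Ioi 0) ∧
    (∫ v in Ioi (0:ℝ), Complex.exp (θ * I) * FJ Y τ (pol v θ)).im = 0 := by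
  have hpi := Real.pi_pos
  have hrot := rotation (F := FJ Y τ) (M := 2 + τ)
    (p := Y - 1) (q := Y - 3) (θ := θ) ?_ (by linarith) (by linarith) (by linarith) (by linarith)
    ?_ ?_
  · refine ⟨hrot.2.1, ?_⟩
    rw [← hrot.2.2]
    have e : ∀ v ∈ Ioi (0:ℝ), FJ Y τ v =
        (((Real.exp (-(τ / 2 * v ^ 2)) - 1) * v ^ Y / v ^ 3 : ℝ) : ℂ) := by
      intro v hv
      unfold FJ
      push_cast
      rw [Complex.ofReal_cpow (le_of_lt hv)]
    rw [setIntegral_congr_fun measurableSet_Ioi e, integral_complex_ofReal, Complex.ofReal_im]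
  · intro u hu
    have hu' := ne_zero_of_re hu
    have := diff_cpow hu Y
    have h3 : u ^ 3 ≠ 0 := pow_ne_zero _ hu'
    unfold FJ
    apply DifferentiableAt.differentiableWithinAt
    fun_prop (disch := assumption)
  · intro v hv α hα
    rw [uIcc_of_le hθ1.le] at hα
    unfold FJ
    rw [norm_div, norm_mul, Complex.norm_cpow_real, norm_pow, norm_pol hv]
    have h := norm_exp_sub_one_le' (gauss_re_nonneg (v := v) hτ hα.1 (hα.2.trans hθ2))
    have e : v ^ Y = v ^ (Y - 1) * v := by
      nth_rewrite 3 [← Real.rpow_one v]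
      rw [← Real.rpow_add hv]; congr 1; ring
    rw [norm_mul, norm_pow, norm_pol hv, Complex.norm_real, Real.norm_eq_abs,
      abs_of_pos (by positivity)] at h
    calc _ ≤ (2 * (τ / 2 * v ^ 2)) * v ^ Y / v ^ 3 := by gcongr
      _ = τ * v ^ (Y - 1) := by rw [e]; field_simp
      _ ≤ _ := by gcongr; linarith
  · intro v hv α hα
    rw [uIcc_of_le hθ1.le] at hα
    unfold FJ
    rw [norm_div, norm_mul, Complex.norm_cpow_real, norm_pow, norm_pol hv]
    have h := norm_exp_sub_one_le_two (gauss_re_nonneg (v := v) hτ hα.1 (hα.2.trans hθ2))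
    have e : v ^ Y = v ^ (Y - 3) * v ^ 3 := by
      rw [← Real.rpow_natCast, ← Real.rpow_add hv]; congr 1; push_cast; ring
    calc _ ≤ 2 * v ^ Y / v ^ 3 := by gcongr
      _ = 2 * v ^ (Y - 3) := by rw [e]; field_simp
      _ ≤ _ := by gcongr; linarith

lemma F1_lemma {Y : ℝ} (hY1 : 1 < Y) (hY2 : Y < 2) :
    ∃ K, 0 ≤ K ∧ ∀ τ : ℝ, 0 < τ →
      IntegrableOn (fun v : ℝ => F1 Y τ v) (Ioi 0) ∧
      |(∫ v in Ioi (0:ℝ), F1 Y τ v).re + Real.Gamma (Y + 1) / (2 - Y) * Real.sin (π * Y / 2)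
        - τ / 2 * (Real.Gamma Y * (Y + 1) * (Y + 2) * Real.sin (π * Y / 2))| ≤ K * τ ^ 2 := by
  have hpi := Real.pi_pos
  set θ : ℝ := π / 6 with hθ
  have hθ1 : 0 < θ := by positivity
  have hθ2 : θ ≤ π / 6 := le_rfl
  have hsinθ : 0 < Real.sin θ := Real.sin_pos_of_pos_of_lt_pi hθ1 (by linarith)
  have hcosθ : 0 < Real.cos θ := Real.cos_pos_of_mem_Ioo ⟨by linarith, by linarith⟩
  set env : ℝ → ℝ := fun v =>
    Real.exp (-(v * Real.sin θ)) * (1 / v + 2 / v ^ 2 + 2 / v ^ 3) * v ^ ((Y + 2) + 2)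
    with henv
  have hienv : IntegrableOn env (Ioi 0) := integrable_env (by linarith) hsinθ
  refine ⟨∫ v in Ioi (0:ℝ), env v, ?_, ?_⟩
  · refine setIntegral_nonneg measurableSet_Ioi fun v hv => ?_
    have hv : 0 < v := hv
    simp only [henv]; positivity
  intro τ hτ
  obtain ⟨hi, he⟩ := F1_rot (θ := θ) hY1 hθ1 hθ2 hτ
  refine ⟨hi, ?_⟩
  obtain ⟨j1, j2⟩ := FJ_rot hY1 hY2 hθ1 hθ2 hτ
  obtain ⟨m1, m1e⟩ := main_int_one hY1 hY2 hθ1 (by linarith)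
  obtain ⟨m2, m2e⟩ := main_int_two hY1 hθ1 (by linarith)
  set r : ℝ → ℂ := fun v => Complex.exp (θ * I) * (B0 (pol v θ) * pol v θ ^ (Y:ℂ) *
    (Complex.exp (-((τ / 2 : ℝ) * pol v θ ^ 2)) - 1 + (τ / 2 : ℝ) * pol v θ ^ 2)) with hr
  have hrb : ∀ v ∈ Ioi (0:ℝ), ‖r v‖ ≤ τ ^ 2 * env v := by
    intro v hv
    have hv : 0 < v := hv
    have h := norm_exp_remainder (gauss_re_nonneg (v := v) hτ hθ1.le hθ2)
    rw [norm_mul (_ : ℂ) (pol v θ ^ 2), norm_pow, norm_pol hv, Complex.norm_real, Real.norm_eq_abs,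
      abs_of_pos (by positivity)] at h
    simp only [hr]
    rw [norm_mul, Complex.norm_exp_ofReal_mul_I, one_mul, norm_mul, norm_mul,
      Complex.norm_cpow_real, norm_pol hv]
    have e : v ^ (Y + 2 + 2) = v ^ Y * v ^ 4 := by
      rw [← Real.rpow_natCast, ← Real.rpow_add hv]; congr 1; push_cast; ring
    have hpos : 0 ≤ env v := by simp only [henv]; positivity
    calc _ ≤ (Real.exp (-(v * Real.sin θ)) * (1 / v + 2 / v ^ 2 + 2 / v ^ 3)) * v ^ Y *
          (3 * (τ / 2 * v ^ 2) ^ 2) := by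
          gcongr
          exact norm_B0_le hv θ
      _ = (3 / 4) * (τ ^ 2 * env v) := by simp only [henv]; rw [e]; ring
      _ ≤ _ := by nlinarith [mul_nonneg (sq_nonneg τ) hpos]
  have hrm : AEStronglyMeasurable r (volume.restrict (Ioi 0)) := by
    refine ContinuousOn.aestronglyMeasurable ?_ measurableSet_Ioi
    intro v hv
    have hv : 0 < v := hv
    have hre : 0 < (pol v θ).re := by rw [pol_re]; positivity
    have hpc : Continuous (fun v : ℝ => pol v θ) := by unfold pol; fun_prop
    have c1 : ContinuousAt (fun v : ℝ => B0 (pol v θ)) v :=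
      ContinuousAt.comp (g := B0) (diffB0 (ne_zero_of_re hre)).continuousAt hpc.continuousAt
    have c2 : ContinuousAt (fun v : ℝ => pol v θ ^ (Y:ℂ)) v :=
      ContinuousAt.comp (g := fun u : ℂ => u ^ (Y:ℂ)) (diff_cpow hre Y).continuousAt
        hpc.continuousAt
    apply ContinuousAt.continuousWithinAt
    simp only [hr]
    fun_prop
  have hri : IntegrableOn r (Ioi 0) := Integrable.mono' (hienv.const_mul (τ ^ 2)) hrm
    ((ae_restrict_iff' measurableSet_Ioi).2 (ae_of_all _ hrb))
  have hrn : ‖∫ v in Ioi (0:ℝ), r v‖ ≤ (∫ v in Ioi (0:ℝ), env v) * τ ^ 2 := by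
    refine (norm_integral_le_of_norm_le (hienv.const_mul _)
      ((ae_restrict_iff' measurableSet_Ioi).2 (ae_of_all _ hrb))).trans (le_of_eq ?_)
    rw [integral_const_mul]; ring
  have key : ∀ v ∈ Ioi (0:ℝ), Complex.exp (θ * I) * F1 Y τ (pol v θ) =
      Complex.exp (θ * I) * (Bf (pol v θ) * pol v θ ^ (Y : ℂ)) +
      (-(τ / 2 : ℝ) : ℂ) * (Complex.exp (θ * I) *
        (B0 (pol v θ) * (pol v θ ^ (Y : ℂ) * pol v θ ^ 2))) +
      r v + (-2 * I) * (Complex.exp (θ * I) * FJ Y τ (pol v θ)) := by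
    intro v hv
    simp only [hr, F1, FJ, Bf]
    ring
  rw [he, setIntegral_congr_fun measurableSet_Ioi key, integral_add, integral_add, integral_add,
    integral_const_mul (-(τ / 2 : ℝ) : ℂ), integral_const_mul (-2 * I), m1e, m2e]
  · set J := ∫ v in Ioi (0:ℝ), Complex.exp (θ * I) * FJ Y τ (pol v θ) with hJ
    have x1 : (Complex.exp (π * (Y + 1) / 2 * I)).re = -Real.sin (π * Y / 2) := by
      have : (π * (Y + 1) / 2 * I : ℂ) = ((π * Y / 2 + π / 2 : ℝ) : ℂ) * I := by push_cast; ring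
      rw [this, Complex.exp_ofReal_mul_I_re, Real.cos_add_pi_div_two]
    have x2 : (I * Complex.exp (π * Y / 2 * I)).re = -Real.sin (π * Y / 2) := by
      have : (π * Y / 2 * I : ℂ) = ((π * Y / 2 : ℝ) : ℂ) * I := by push_cast; ring
      rw [this, Complex.I_mul_re, Complex.exp_ofReal_mul_I_im]
    have x3 : ((-2 * I) * J).re = 0 := by
      have : (-2 * I) * J = ((-2 : ℝ) : ℂ) * (I * J) := by push_cast; ring
      rw [this, Complex.re_ofReal_mul, Complex.I_mul_re, j2]; simp
    have x4 : ((-(τ / 2 : ℝ) : ℂ) * (((Real.Gamma Y * (Y + 1) * (Y + 2) : ℝ) : ℂ) *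
        (I * Complex.exp (π * Y / 2 * I)))).re =
        τ / 2 * (Real.Gamma Y * (Y + 1) * (Y + 2) * Real.sin (π * Y / 2)) := by
      rw [← Complex.ofReal_neg, Complex.re_ofReal_mul, Complex.re_ofReal_mul, x2]; ring
    rw [Complex.add_re, Complex.add_re, Complex.add_re, x3, x4, Complex.re_ofReal_mul, x1]
    refine le_trans (le_of_eq ?_) ((Complex.abs_re_le_norm _).trans hrn)
    congr 1; ring
  · exact m1
  · exact m2.const_mul _
  · exact m1.add (m2.const_mul _)
  · exact hri
  · exact (m1.add (m2.const_mul _)).add hri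
  · exact j1.const_mul _

end TSM

namespace TSM
open Complex (I)

lemma angle_exists {c : ℂ} (hc : 0 < c.re) (Y : ℝ) :
    ∃ θ : ℝ, 0 < θ ∧ θ ≤ π / 6 ∧ ∀ α ∈ Icc 0 θ, 0 ≤ (c * Complex.exp (α * Y * I)).re := by
  have hcont : Continuous (fun α : ℝ => (c * Complex.exp (α * Y * I)).re) := by fun_prop
  have h0 : 0 < (c * Complex.exp (((0:ℝ):ℂ) * Y * I)).re := by simpa using hc
  have hev := hcont.continuousAt.eventually (lt_mem_nhds h0)
  obtain ⟨δ, hδ, hb⟩ := Metric.eventually_nhds_iff.1 hev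
  refine ⟨min (δ / 2) (π / 6), by have := Real.pi_pos; positivity, min_le_right _ _, ?_⟩
  intro α hα
  refine (hb ?_).le
  rw [Real.dist_eq, sub_zero, abs_of_nonneg hα.1]
  have := hα.2.trans (min_le_left _ _)
  linarith

lemma core {Y : ℝ} {c : ℂ} (hY1 : 1 < Y) (hY2 : Y < 2) (hc : 0 < c.re) :
    ∃ K, 0 ≤ K ∧ ∀ τ l : ℝ, 0 < τ → 0 < l →
      |1 / π * (∫ v in Ioi (0:ℝ), 2 * (Bf v).re * (Real.exp (-(τ / 2 * v ^ 2)) *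
          ((Complex.exp (-(l * (c * (v ^ Y : ℝ))))).re - 1)))
        - l * (2 * c.re / π * (Real.Gamma (Y + 1) * Real.sin (π * Y / 2))) *
          (1 / (2 - Y) - τ * ((Y + 1) * (Y + 2) / (2 * Y)))| ≤ K * (l * τ ^ 2 + l ^ 2) := by
  have hpi := Real.pi_pos
  obtain ⟨θ, hθ1, hθ2, hθ⟩ := angle_exists hc Y
  obtain ⟨θ', hθ1', hθ2', hθ'⟩ := angle_exists (c := star c) (by simpa using hc) Y
  obtain ⟨K1, hK1, H1⟩ := F2_lemma hY1 hθ1 hθ2 hθ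
  obtain ⟨K2, hK2, H2⟩ := F2_lemma hY1 hθ1' hθ2' hθ'
  obtain ⟨K3, hK3, H3⟩ := F1_lemma hY1 hY2
  refine ⟨1 / π * (K1 + K2 + 2 * c.re * K3), by positivity, fun τ l hτ hl => ?_⟩
  obtain ⟨i1, b1⟩ := H1 τ l hτ hl
  obtain ⟨i2, b2⟩ := H2 τ l hτ hl
  obtain ⟨i3, b3⟩ := H3 τ hτ
  have key : ∀ v ∈ Ioi (0:ℝ), 2 * (Bf v).re * (Real.exp (-(τ / 2 * v ^ 2)) *
          ((Complex.exp (-(l * (c * (v ^ Y : ℝ))))).re - 1)) =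
      (F2 Y τ l c v + F2 Y τ l (star c) v - ((2 * l * c.re : ℝ) : ℂ) * F1 Y τ v).re := by
    intro v hv
    have hv : 0 < v := hv
    have hcp : (v : ℂ) ^ (Y:ℂ) = ((v ^ Y : ℝ) : ℂ) := (Complex.ofReal_cpow hv.le Y).symm
    have hB : (B0 v).re = (Bf v).re := by
      have : 2 * I / (v:ℂ) ^ 3 = ((2 / v ^ 3 : ℝ) : ℂ) * I := by push_cast; ring
      simp only [Bf, Complex.sub_re]
      rw [this, Complex.re_ofReal_mul]; simp
    set x := v ^ Y
    set E := Complex.exp (-(l * (c * (x : ℝ)))) with hE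
    have hE' : Complex.exp (-(l * (star c * (x : ℝ)))) = star E := by
      rw [hE]
      simp only [Complex.star_def]
      rw [← Complex.exp_conj]
      simp
    have hg : Complex.exp (-((τ / 2 : ℝ) * (v:ℂ) ^ 2)) =
      ((Real.exp (-(τ / 2 * v ^ 2)) : ℝ) : ℂ) := by push_cast; rfl
    have hsum : F2 Y τ l c v + F2 Y τ l (star c) v =
        ((Real.exp (-(τ / 2 * v ^ 2)) * (2 * (E.re - 1 + l * c.re * x)) : ℝ) : ℂ) * B0 v := by
      unfold F2
      rw [hcp, hg, hE', ← hE]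
      have : (E - 1 + l * (c * (x:ℝ))) + (star E - 1 + l * (star c * (x:ℝ)))
        = ((2 * (E.re - 1 + l * c.re * x) : ℝ) : ℂ) := by
        apply Complex.ext
        · simp; ring
        · simp; ring
      rw [Complex.ofReal_mul, ← this]; ring
    have hF1 : F1 Y τ v = ((Real.exp (-(τ / 2 * v ^ 2)) * x : ℝ) : ℂ) * Bf v := by
      unfold F1
      rw [hcp, hg, Complex.ofReal_mul]; ring
    rw [hsum, hF1, Complex.sub_re, Complex.re_ofReal_mul, Complex.re_ofReal_mul,
      Complex.re_ofReal_mul, hB]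
    ring
  rw [setIntegral_congr_fun measurableSet_Ioi key]
  have hInt0 : IntegrableOn (fun v : ℝ => F2 Y τ l c v + F2 Y τ l (star c) v -
      ((2 * l * c.re : ℝ) : ℂ) * F1 Y τ v) (Ioi 0) := (i1.add i2).sub (i3.const_mul _)
  have hre : ∫ v in Ioi (0:ℝ), (F2 Y τ l c v + F2 Y τ l (star c) v -
      ((2 * l * c.re : ℝ) : ℂ) * F1 Y τ v).re = (∫ v in Ioi (0:ℝ), (F2 Y τ l c v +
      F2 Y τ l (star c) v - ((2 * l * c.re : ℝ) : ℂ) * F1 Y τ v)).re :=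
    integral_re hInt0
  have i12 : IntegrableOn (fun v : ℝ => F2 Y τ l c v + F2 Y τ l (star c) v) (Ioi 0) := i1.add i2
  rw [hre, integral_sub i12 (i3.const_mul _), integral_add i1 i2, integral_const_mul,
    Complex.sub_re, Complex.add_re, Complex.re_ofReal_mul]
  set x1 := ∫ v in Ioi (0:ℝ), F2 Y τ l c v
  set x2 := ∫ v in Ioi (0:ℝ), F2 Y τ l (star c) v
  set x3 := ∫ v in Ioi (0:ℝ), F1 Y τ v
  have y1 := (Complex.abs_re_le_norm x1).trans b1
  have y2 := (Complex.abs_re_le_norm x2).trans b2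
  have g1 : Real.Gamma (Y + 1) = Y * Real.Gamma Y := Real.Gamma_add_one (by linarith)
  set S := Real.sin (π * Y / 2)
  have hYne : Y ≠ 0 := by linarith
  have h2Y : 2 - Y ≠ 0 := by linarith
  have eq : 1 / π * (x1.re + x2.re - 2 * l * c.re * x3.re) -
      l * (2 * c.re / π * (Real.Gamma (Y + 1) * S)) *
          (1 / (2 - Y) - τ * ((Y + 1) * (Y + 2) / (2 * Y))) =
      1 / π * (x1.re + x2.re - 2 * l * c.re * (x3.re + Real.Gamma (Y + 1) / (2 - Y) * S
        - τ / 2 * (Real.Gamma Y * (Y + 1) * (Y + 2) * S))) := by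
    rw [g1]; field_simp; ring
  rw [eq, abs_mul, abs_of_pos (by positivity : 0 < 1 / π), mul_assoc (1 / π)]
  gcongr
  set D := x3.re + Real.Gamma (Y + 1) / (2 - Y) * S
        - τ / 2 * (Real.Gamma Y * (Y + 1) * (Y + 2) * S)
  have t1 : |x1.re + x2.re - 2 * l * c.re * D| ≤ |x1.re| + |x2.re| + 2 * l * c.re * |D| := by
    calc _ ≤ |x1.re + x2.re| + |2 * l * c.re * D| := abs_sub _ _
      _ ≤ _ := by
        rw [abs_mul, abs_of_pos (by positivity : 0 < 2 * l * c.re)]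
        gcongr; exact abs_add_le _ _
  have t2 : 2 * l * c.re * |D| ≤ 2 * l * c.re * (K3 * τ ^ 2) := by gcongr
  have t3 : 0 ≤ (K1 + K2) * (l * τ ^ 2) := by positivity
  have t4 : 0 ≤ 2 * c.re * K3 * l ^ 2 := by positivity
  nlinarith

/-- Parseval identity for a Schwartz function and a probability measure. -/
lemma parseval_schwartz (μ : Measure ℝ) [IsProbabilityMeasure μ] (g : SchwartzMap ℝ ℂ) :
    ∫ x, g x ∂μ = (1 / (2 * π) : ℝ) *
      ∫ u : ℝ, (∫ y : ℝ, Complex.exp (-(u * y * I)) * g y) * charFun μ u := by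
  have hpi := Real.pi_pos
  have hF : ∀ w : ℝ, FourierTransform.fourier g w = ∫ y : ℝ, Complex.exp (-((2 * π * w : ℝ) * y * I)) * g y := by
    intro w
    rw [SchwartzMap.fourier_coe, Real.fourier_real_eq_integral_exp_smul]
    congr 1; ext y
    rw [smul_eq_mul]; congr 2; push_cast; ring
  have hinv : ∀ x : ℝ, g x = ∫ w : ℝ, Complex.exp ((2 * π * w : ℝ) * x * I) * FourierTransform.fourier g w := by
    intro x
    have h1 : FourierTransformInv.fourierInv (FourierTransform.fourier g) = g :=
      FourierTransform.fourierInv_fourier_eq g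
    conv_lhs => rw [← h1]
    rw [SchwartzMap.fourierInv_coe, Real.fourierInv_eq']
    congr 1; ext w
    rw [smul_eq_mul]; congr 2; simp; ring
  have hFi : Integrable (FourierTransform.fourier g : ℝ → ℂ) := (FourierTransform.fourier g).integrable
  have hInt0 : Integrable (Function.uncurry fun (x w : ℝ) =>
      Complex.exp ((2 * π * w : ℝ) * x * I) * FourierTransform.fourier g w) (μ.prod volume) := by
    have h2 : Integrable (fun p : ℝ × ℝ => FourierTransform.fourier g p.2) (μ.prod volume) :=
      hFi.comp_snd μ
    refine h2.mono ?_ (ae_of_all _ fun p => ?_)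
    · refine AEStronglyMeasurable.mul ?_ h2.1
      exact Continuous.aestronglyMeasurable (by fun_prop)
    · simp only [Function.uncurry]
      have : (((2 * π * p.2 : ℝ) : ℂ) * p.1 * I) = ((2 * π * p.2 * p.1 : ℝ) : ℂ) * I := by
        push_cast; ring
      rw [norm_mul, this, Complex.norm_exp_ofReal_mul_I, one_mul]
  calc ∫ x, g x ∂μ = ∫ x : ℝ, (∫ w : ℝ, Complex.exp ((2 * π * w : ℝ) * x * I) *
          FourierTransform.fourier g w) ∂μ := by
        congr 1; ext x; exact hinv x
    _ = ∫ w : ℝ, (∫ x : ℝ, Complex.exp ((2 * π * w : ℝ) * x * I) *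
          FourierTransform.fourier g w ∂μ) :=
        integral_integral_swap hInt0
    _ = ∫ w : ℝ, (fun u : ℝ => (∫ y : ℝ, Complex.exp (-(u * y * I)) * g y) * charFun μ u)
          (2 * π * w) := by
        congr 1; ext w
        show _ = (∫ y : ℝ, Complex.exp (-((2 * π * w : ℝ) * y * I)) * g y) * charFun μ (2 * π * w)
        rw [integral_mul_const, charFun_apply_real, hF w, mul_comm]
    _ = _ := by
        rw [Measure.integral_comp_mul_left (fun u : ℝ => (∫ y : ℝ, Complex.exp (-(u * y * I)) * g y)
          * charFun μ u) (2 * π), abs_of_pos (by positivity)]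
        rw [Complex.real_smul, one_div]

end TSM

namespace TSM
open Complex (I)

/-- the truncated square -/
def trf (x : ℝ) : ℝ := Set.indicator {x : ℝ | |x| ≤ 1} (fun x => x ^ 2) x

lemma trf_measurable : Measurable trf := by
  unfold trf
  refine Measurable.indicator (by fun_prop) ?_
  exact measurableSet_le (by fun_prop) (by fun_prop)

lemma Bf_conj {v : ℝ} (hv : v ≠ 0) : Bf (-(v:ℂ)) = star (Bf v) := by
  rw [← Bf_eq_integral (by simpa using hv), ← Bf_eq_integral (by simpa using hv)]
  rw [intervalIntegral.integral_of_le (by norm_num), intervalIntegral.integral_of_le (by norm_num)]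
  rw [Complex.star_def, ← integral_conj]
  congr 1; ext z
  rw [map_mul, ← Complex.exp_conj]
  simp

lemma ft_trf {u : ℝ} (hu : u ≠ 0) :
    ∫ y : ℝ, Complex.exp (-(u * y * I)) * (trf y : ℂ) = ((2 * (Bf (|u| : ℝ)).re : ℝ) : ℂ) := by
  have h1 : ∀ y : ℝ, Complex.exp (-(u * y * I)) * (trf y : ℂ) =
      Set.indicator (Icc (-1:ℝ) 1) (fun y : ℝ => (y:ℂ) ^ 2 * Complex.exp (-(u * y * I))) y := by
    intro y
    unfold trf
    by_cases hy : |y| ≤ 1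
    · rw [indicator_of_mem (by exact hy), indicator_of_mem (by exact abs_le.1 hy)]
      push_cast; ring
    · rw [indicator_of_notMem (by exact hy),
        indicator_of_notMem (by intro h; exact hy (abs_le.2 h))]
      simp
  have hc : Continuous (fun y : ℝ => (y:ℂ) ^ 2 * Complex.exp (-(u * y * I))) := by fun_prop
  rw [integral_congr_ae (ae_of_all _ h1), integral_indicator measurableSet_Icc,
    integral_Icc_eq_integral_Ioc, ← intervalIntegral.integral_of_le (by norm_num),
    ← intervalIntegral.integral_add_adjacent_intervals (b := 0) (hc.intervalIntegrable _ _)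
      (hc.intervalIntegrable _ _)]
  have e1 : ∫ y in (0:ℝ)..1, (y:ℂ) ^ 2 * Complex.exp (-(u * y * I)) = Bf (-(u:ℂ)) := by
    rw [← Bf_eq_integral (by simpa using hu)]
    congr 1; ext y; congr 2; ring
  have e2 : ∫ y in (-1:ℝ)..0, (y:ℂ) ^ 2 * Complex.exp (-(u * y * I)) = Bf u := by
    rw [← Bf_eq_integral (by simpa using hu)]
    have := intervalIntegral.integral_comp_neg (a := 0) (b := 1)
      (fun y : ℝ => (y:ℂ) ^ 2 * Complex.exp (-(u * y * I)))
    rw [neg_zero] at this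
    rw [← this]
    congr 1; ext y; push_cast
    rw [neg_sq]; congr 2; ring
  rw [e1, e2, Bf_conj hu]
  have h3 : (Bf (|u| : ℝ)).re = (Bf u).re := by
    rcases abs_choice u with h | h
    · rw [h]
    · rw [h, Complex.ofReal_neg, Bf_conj hu]; simp
  rw [h3]
  apply Complex.ext <;> simp
  ring

def bmp (n : ℕ) : ContDiffBump (0:ℝ) where
  rIn := 1
  rOut := 1 + 1 / ((n:ℝ) + 1)
  rIn_pos := by norm_num
  rIn_lt_rOut := by
    have : 0 < 1 / ((n:ℝ) + 1) := by positivity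
    linarith

def smf (n : ℕ) (x : ℝ) : ℂ := ((bmp n x * x ^ 2 : ℝ) : ℂ)

lemma smf_contDiff (n : ℕ) : ContDiff ℝ (⊤ : ℕ∞) (smf n) := by
  unfold smf
  have : ContDiff ℝ (⊤ : ℕ∞) (fun x : ℝ => bmp n x * x ^ 2) :=
    (bmp n).contDiff.mul (contDiff_id.pow 2)
  exact Complex.ofRealCLM.contDiff.comp this

lemma smf_compact (n : ℕ) : HasCompactSupport (smf n) := by
  have h : HasCompactSupport (fun x : ℝ => bmp n x * x ^ 2) := (bmp n).hasCompactSupport.mul_right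
  exact h.comp_left (g := fun y : ℝ => (y : ℂ)) (by simp)

def sms (n : ℕ) : SchwartzMap ℝ ℂ := (smf_compact n).toSchwartzMap (smf_contDiff n)

lemma sms_apply (n : ℕ) (x : ℝ) : sms n x = smf n x := rfl

lemma bmp_zero (n : ℕ) {x : ℝ} (hx : 1 + 1 / ((n:ℝ) + 1) ≤ |x|) : bmp n x = 0 := by
  apply (bmp n).zero_of_le_dist
  simpa [bmp] using hx

lemma smf_bound (n : ℕ) (x : ℝ) : ‖smf n x‖ ≤ Set.indicator (Icc (-2:ℝ) 2) (fun _ => (4:ℝ)) x := by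
  unfold smf
  by_cases hx : x ∈ Icc (-2:ℝ) 2
  · rw [indicator_of_mem hx, Complex.norm_real, Real.norm_eq_abs,
      abs_of_nonneg (mul_nonneg (bmp n).nonneg (sq_nonneg _))]
    have h1 : bmp n x ≤ 1 := (bmp n).le_one
    have h2 : x ^ 2 ≤ 4 := by nlinarith [hx.1, hx.2]
    nlinarith [(bmp n).nonneg (x := x), sq_nonneg x]
  · rw [indicator_of_notMem hx, bmp_zero]
    · simp
    · have h1 : 1 / ((n:ℝ) + 1) ≤ 1 := by
        rw [div_le_one (by positivity)]
        have : (0:ℝ) ≤ n := by positivity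
        linarith
      have : 2 < |x| := by
        by_contra h
        exact hx (abs_le.1 (not_lt.1 h))
      linarith

lemma smf_tendsto (x : ℝ) : Tendsto (fun n => smf n x) atTop (𝓝 (trf x : ℂ)) := by
  apply tendsto_const_nhds.congr'
  by_cases hx : |x| ≤ 1
  · refine Eventually.of_forall fun n => ?_
    show (trf x : ℂ) = smf n x
    unfold smf trf
    rw [indicator_of_mem (by exact hx), (bmp n).one_of_mem_closedBall (by simpa [bmp] using hx)]
    simp
  · have hx' : 1 < |x| := not_le.1 hx
    have := tendsto_one_div_add_atTop_nhds_zero_nat (𝕜 := ℝ)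
    have h2 := this.eventually (gt_mem_nhds (sub_pos.2 hx'))
    filter_upwards [h2] with n hn
    unfold smf trf
    rw [indicator_of_notMem (by exact hx), bmp_zero n (by linarith)]
    simp

lemma fourier_trunc (μ : Measure ℝ) [IsProbabilityMeasure μ] (hμ : Integrable (charFun μ)) :
    ((∫ x, trf x ∂μ : ℝ) : ℂ) = (1 / (2 * π) : ℝ) *
      ∫ u : ℝ, ((2 * (Bf (|u| : ℝ)).re : ℝ) : ℂ) * charFun μ u := by
  have hL : Tendsto (fun n => ∫ x, smf n x ∂μ) atTop (𝓝 (∫ x, (trf x : ℂ) ∂μ)) := by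
    refine tendsto_integral_of_dominated_convergence (fun _ => 4) (fun n => ?_)
      (integrable_const _) (fun n => ae_of_all _ fun x => ?_) (ae_of_all _ smf_tendsto)
    · exact (smf_contDiff n).continuous.aestronglyMeasurable
    · refine (smf_bound n x).trans ?_
      exact indicator_le_self' (fun _ _ => by norm_num) x
  have hbi : Integrable (Set.indicator (Icc (-2:ℝ) 2) (fun _ => (4:ℝ))) := by
    rw [integrable_indicator_iff measurableSet_Icc]
    exact integrableOn_const (by simp)
  have hbv : ∫ x, Set.indicator (Icc (-2:ℝ) 2) (fun _ => (4:ℝ)) x = 16 := by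
    rw [integral_indicator measurableSet_Icc]; simp; norm_num
  have hne : ∀ (u y : ℝ), ‖Complex.exp (-(u * y * I))‖ = 1 := by
    intro u y
    have : (-((u:ℂ) * y * I)) = ((-(u * y) : ℝ) : ℂ) * I := by push_cast; ring
    rw [this, Complex.norm_exp_ofReal_mul_I]
  have hG : ∀ u : ℝ, Tendsto (fun n => ∫ y : ℝ, Complex.exp (-(u * y * I)) * smf n y) atTop
      (𝓝 (∫ y : ℝ, Complex.exp (-(u * y * I)) * (trf y : ℂ))) := by
    intro u
    refine tendsto_integral_of_dominated_convergence
      (Set.indicator (Icc (-2:ℝ) 2) (fun _ => (4:ℝ))) (fun n => ?_) hbi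
      (fun n => ae_of_all _ fun x => ?_) (ae_of_all _ fun x => (smf_tendsto x).const_mul _)
    · have := (smf_contDiff n).continuous
      exact Continuous.aestronglyMeasurable (by fun_prop)
    · rw [norm_mul, hne, one_mul]; exact smf_bound n x
  have hGb : ∀ (n : ℕ) (u : ℝ), ‖∫ y : ℝ, Complex.exp (-(u * y * I)) * smf n y‖ ≤ 16 := by
    intro n u
    rw [← hbv]
    refine norm_integral_le_of_norm_le hbi (ae_of_all _ fun x => ?_)
    rw [norm_mul, hne, one_mul]; exact smf_bound n x
  have hGm : ∀ n : ℕ, Continuous fun u : ℝ => ∫ y : ℝ, Complex.exp (-(u * y * I)) * smf n y := by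
    intro n
    have hc := (smf_contDiff n).continuous
    refine continuous_of_dominated (bound := Set.indicator (Icc (-2:ℝ) 2) (fun _ => (4:ℝ)))
      (fun u => ?_) (fun u => ae_of_all _ fun x => ?_) hbi (ae_of_all _ fun x => ?_)
    · exact Continuous.aestronglyMeasurable (by fun_prop)
    · rw [norm_mul, hne, one_mul]; exact smf_bound n x
    · fun_prop
  have hR : Tendsto (fun n => ∫ u : ℝ, (∫ y : ℝ, Complex.exp (-(u * y * I)) * smf n y) *
      charFun μ u) atTop (𝓝 (∫ u : ℝ, ((2 * (Bf (|u| : ℝ)).re : ℝ) : ℂ) * charFun μ u)) := by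
    refine tendsto_integral_of_dominated_convergence (fun u => 16 * ‖charFun μ u‖) (fun n => ?_)
      (hμ.norm.const_mul _) (fun n => ae_of_all _ fun u => ?_) ?_
    · exact (hGm n).aestronglyMeasurable.mul hμ.1
    · rw [norm_mul]; gcongr; exact hGb n u
    · have h0 : ∀ᵐ u : ℝ, u ≠ 0 := by simp [ae_iff]
      filter_upwards [h0] with u hu
      rw [← ft_trf hu]
      exact (hG u).mul_const _
  have heq : ∀ n, ∫ x, smf n x ∂μ = (1 / (2 * π) : ℝ) *
      ∫ u : ℝ, (∫ y : ℝ, Complex.exp (-(u * y * I)) * smf n y) * charFun μ u :=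
    fun n => parseval_schwartz μ (sms n)
  have := tendsto_nhds_unique hL ((hR.const_mul ((1 / (2 * π) : ℝ) : ℂ)).congr fun n => (heq n).symm)
  rw [← this]
  exact integral_ofReal.symm

end TSM

namespace TSM
open Complex (I)

lemma half_line (μ : Measure ℝ) [IsProbabilityMeasure μ] {τ : ℝ} (hτ : 0 < τ)
    (hb : ∀ u, ‖charFun μ u‖ ≤ Real.exp (-(τ / 2) * u ^ 2)) (φ : ℝ → ℝ)
    (hφ : ∀ u, (charFun μ u).re = φ |u|) :
    IntegrableOn (fun v : ℝ => 2 * (Bf v).re * φ v) (Ioi 0) ∧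
    ∫ x, trf x ∂μ = 1 / π * ∫ v in Ioi (0:ℝ), 2 * (Bf v).re * φ v := by
  have hcm : Measurable (charFun μ) := measurable_charFun
  have hi : Integrable (charFun μ) := by
    refine (integrable_exp_neg_mul_sq (half_pos hτ)).mono' hcm.aestronglyMeasurable
      (ae_of_all _ hb)
  have hBm : Measurable fun u : ℝ => 2 * (Bf (|u| : ℝ)).re := by
    unfold Bf B0; fun_prop
  have hi2 : Integrable (fun u : ℝ => ((2 * (Bf (|u| : ℝ)).re : ℝ) : ℂ) * charFun μ u) := by
    refine (hi.norm.const_mul 2).mono' ?_ ?_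
    · exact ((Complex.measurable_ofReal.comp hBm).mul hcm).aestronglyMeasurable
    · have h0 : ∀ᵐ u : ℝ, u ≠ 0 := by simp [ae_iff]
      filter_upwards [h0] with u hu
      rw [norm_mul, Complex.norm_real]
      gcongr
      have h1 := norm_Bf_le (u := ((|u| : ℝ) : ℂ)) (by simpa using hu) (by simp)
      have h2 := (Complex.abs_re_le_norm _).trans h1
      rw [Real.norm_eq_abs, abs_mul, abs_two]; linarith
  have hre : ∀ u : ℝ, (((2 * (Bf (|u| : ℝ)).re : ℝ) : ℂ) * charFun μ u).re =
      2 * (Bf (|u| : ℝ)).re * φ |u| := by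
    intro u; rw [Complex.re_ofReal_mul, hφ]
  have hi3 : Integrable (fun u : ℝ => 2 * (Bf (|u| : ℝ)).re * φ |u|) := by
    have := hi2.re
    refine this.congr (ae_of_all _ fun u => ?_)
    exact hre u
  constructor
  · refine (hi3.integrableOn (s := Ioi 0)).congr_fun (fun v hv => ?_) measurableSet_Ioi
    have hv : 0 < v := hv
    simp only [abs_of_pos hv]
  · have h := congrArg Complex.re (fourier_trunc μ hi)
    rw [Complex.ofReal_re, Complex.re_ofReal_mul] at h
    have h4 : (∫ u : ℝ, ((2 * (Bf (|u| : ℝ)).re : ℝ) : ℂ) * charFun μ u).re =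
        ∫ u : ℝ, 2 * (Bf (|u| : ℝ)).re * φ |u| := by
      rw [← integral_congr_ae (ae_of_all _ hre)]
      exact (integral_re hi2).symm
    rw [h, h4, integral_comp_abs (f := fun v : ℝ => 2 * (Bf v).re * φ v)]
    field_simp

lemma trunc_diff (ν : Measure ℝ) [IsProbabilityMeasure ν] {τ : ℝ} (hτ : 0 < τ) {c : ℂ}
    {Y l : ℝ}
    (hb : ∀ u, ‖charFun ν u‖ ≤ Real.exp (-(τ / 2) * u ^ 2))
    (hφ : ∀ u, (charFun ν u).re = Real.exp (-(τ / 2 * |u| ^ 2)) *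
      (Complex.exp (-(l * (c * (|u| ^ Y : ℝ))))).re) :
    ∫ x, trf x ∂ν - ∫ x, trf x ∂(gaussianReal 0 τ.toNNReal) =
      1 / π * (∫ v in Ioi (0:ℝ), 2 * (Bf v).re * (Real.exp (-(τ / 2 * v ^ 2)) *
          ((Complex.exp (-(l * (c * (v ^ Y : ℝ))))).re - 1))) := by
  have hg : ∀ u : ℝ, charFun (gaussianReal 0 τ.toNNReal) u =
      ((Real.exp (-(τ / 2) * u ^ 2) : ℝ) : ℂ) := by
    intro u
    rw [charFun_gaussianReal, Real.coe_toNNReal _ hτ.le]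
    push_cast; congr 1; ring
  obtain ⟨i1, e1⟩ := half_line ν hτ hb (fun v => Real.exp (-(τ / 2 * v ^ 2)) *
      (Complex.exp (-(l * (c * (v ^ Y : ℝ))))).re) hφ
  obtain ⟨i2, e2⟩ := half_line (gaussianReal 0 τ.toNNReal) hτ
    (fun u => by rw [hg, Complex.norm_real, Real.norm_eq_abs, abs_of_pos (Real.exp_pos _)])
    (fun v => Real.exp (-(τ / 2 * v ^ 2)))
    (fun u => by rw [hg, Complex.ofReal_re, sq_abs]; congr 1; ring)
  rw [e1, e2, ← mul_sub, ← integral_sub i1 i2]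
  congr 2; ext v; ring

lemma tail_int {τ : ℝ} (hτ : 0 < τ) (hτ2 : τ ≤ 1 / 2) :
    IntegrableOn (fun x : ℝ => (x ^ 2 - τ) * Real.exp (-x ^ 2 / (2 * τ))) (Ioi 1) ∧
    ∫ x in Ioi (1:ℝ), (x ^ 2 - τ) * Real.exp (-x ^ 2 / (2 * τ)) =
      τ * Real.exp (-(1 / (2 * τ))) := by
  have hd : ∀ x ∈ Ici (1:ℝ), HasDerivAt (fun x : ℝ => -(τ * x * Real.exp (-x ^ 2 / (2 * τ))))
      ((x ^ 2 - τ) * Real.exp (-x ^ 2 / (2 * τ))) x := by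
    intro x _
    have h1 : HasDerivAt (fun x : ℝ => -x ^ 2 / (2 * τ)) (-(2 * x) / (2 * τ)) x := by
      have := ((hasDerivAt_pow 2 x).neg).div_const (2 * τ)
      simpa using this
    have h2 : HasDerivAt (fun x : ℝ => -(τ * x * Real.exp (-x ^ 2 / (2 * τ))))
        (-(τ * 1 * Real.exp (-x ^ 2 / (2 * τ)) +
          τ * x * (Real.exp (-x ^ 2 / (2 * τ)) * (-(2 * x) / (2 * τ))))) x :=
      (((hasDerivAt_id x).const_mul τ).mul h1.exp).neg
    convert h2 using 1
    field_simp; ring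
  have hp : ∀ x ∈ Ioi (1:ℝ), 0 ≤ (x ^ 2 - τ) * Real.exp (-x ^ 2 / (2 * τ)) := by
    intro x hx
    have hx : 1 < x := hx
    have : 0 ≤ x ^ 2 - τ := by nlinarith
    positivity
  have ht : Tendsto (fun x : ℝ => -(τ * x * Real.exp (-x ^ 2 / (2 * τ)))) atTop (𝓝 0) := by
    rw [← neg_zero]
    refine Tendsto.neg ?_
    have hz : Tendsto (fun x : ℝ => 2 * τ ^ 2 * x⁻¹) atTop (𝓝 0) := by
      have := tendsto_inv_atTop_zero.const_mul (b := 2 * τ ^ 2) (α := ℝ) (M := ℝ)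
      rwa [mul_zero] at this
    refine squeeze_zero' ?_ ?_ hz
    · filter_upwards [eventually_gt_atTop 0] with x hx
      positivity
    · filter_upwards [eventually_gt_atTop 0] with x hx
      have h1 : x ^ 2 / (2 * τ) ≤ Real.exp (x ^ 2 / (2 * τ)) := by
        have := Real.add_one_le_exp (x ^ 2 / (2 * τ)); linarith
      have h2 : Real.exp (-x ^ 2 / (2 * τ)) ≤ (x ^ 2 / (2 * τ))⁻¹ := by
        rw [neg_div, Real.exp_neg]
        gcongr
      calc τ * x * Real.exp (-x ^ 2 / (2 * τ)) ≤ τ * x * (x ^ 2 / (2 * τ))⁻¹ := by gcongr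
        _ = 2 * τ ^ 2 * x⁻¹ := by field_simp
  refine ⟨integrableOn_Ioi_deriv_of_nonneg' hd hp ht, ?_⟩
  rw [integral_Ioi_of_hasDerivAt_of_nonneg' hd hp ht]
  simp [neg_div]

/-- Gaussian truncated second moment. -/
lemma gauss_tail {τ : ℝ} (hτ : 0 < τ) (hτ2 : τ ≤ 1 / 2) :
    |∫ x, trf x ∂(gaussianReal 0 τ.toNNReal) - τ| ≤ 4 * (√τ * Real.exp (-(1 / (2 * τ)))) := by
  have hne : τ.toNNReal ≠ 0 := by simpa using hτ
  have hpi := Real.pi_gt_three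
  have hx2 : ∫ x, x ^ 2 ∂(gaussianReal 0 τ.toNNReal) = τ := by
    have h := variance_fun_id_gaussianReal (μ := 0) (v := τ.toNNReal)
    rw [variance_of_integral_eq_zero (by fun_prop) (by simp)] at h
    simpa [hτ.le] using h
  have hi1 : Integrable (fun x : ℝ => x ^ 2) (gaussianReal 0 τ.toNNReal) :=
    (memLp_id_gaussianReal 2).integrable_sq
  have htr : ∀ x, 0 ≤ trf x ∧ trf x ≤ x ^ 2 := by
    intro x; unfold trf
    exact ⟨indicator_nonneg (fun _ _ => sq_nonneg _) _,
      indicator_le_self' (f := fun x : ℝ => x ^ 2) (fun _ _ => sq_nonneg _) _⟩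
  have hi2 : Integrable trf (gaussianReal 0 τ.toNNReal) := by
    refine hi1.mono' trf_measurable.aestronglyMeasurable (ae_of_all _ fun x => ?_)
    rw [Real.norm_eq_abs, abs_of_nonneg (htr x).1]; exact (htr x).2
  have hle : ∫ x, trf x ∂(gaussianReal 0 τ.toNNReal) ≤ τ := by
    exact (integral_mono hi2 hi1 fun x => (htr x).2).trans hx2.le
  rw [abs_sub_comm, abs_of_nonneg (by linarith)]
  have hd : τ - ∫ x, trf x ∂(gaussianReal 0 τ.toNNReal) =
      ∫ x, (x ^ 2 - trf x) ∂(gaussianReal 0 τ.toNNReal) := by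
    rw [integral_sub hi1 hi2, hx2]
  set k := (√(2 * π * τ))⁻¹ with hk
  have hk0 : 0 < k := by positivity
  have hpdf : ∀ x, gaussianPDFReal 0 τ.toNNReal x = k * Real.exp (-x ^ 2 / (2 * τ)) := by
    intro x; simp [gaussianPDFReal, hτ.le, hk]
  set f : ℝ → ℝ := fun x => k * Real.exp (-x ^ 2 / (2 * τ)) * (x ^ 2 - trf x) with hf
  have habs : ∀ x, f |x| = f x := by
    intro x; simp [hf, trf, Set.indicator]
  have hd2 : ∫ x, (x ^ 2 - trf x) ∂(gaussianReal 0 τ.toNNReal) = 2 * ∫ x in Ioi (0:ℝ), f x := by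
    rw [integral_gaussianReal_eq_integral_smul hne, ← integral_comp_abs (f := f)]
    congr 1; ext x
    rw [habs, hpdf, smul_eq_mul]
  obtain ⟨j1, j2⟩ := tail_int hτ hτ2
  have hb : ∫ x in Ioi (0:ℝ), f x ≤ 2 * k * (τ * Real.exp (-(1 / (2 * τ)))) := by
    set g : ℝ → ℝ := fun x => 2 * k * ((x ^ 2 - τ) * Real.exp (-x ^ 2 / (2 * τ))) with hg
    have hgi : IntegrableOn g (Ioi 1) := j1.const_mul _
    have hgv : ∫ x in Ioi (1:ℝ), g x = 2 * k * (τ * Real.exp (-(1 / (2 * τ)))) := by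
      rw [← j2, ← integral_const_mul]
    have hgv2 : ∫ x in Ioi (0:ℝ), (Ioi (1:ℝ)).indicator g x = ∫ x in Ioi (1:ℝ), g x := by
      rw [setIntegral_indicator measurableSet_Ioi]
      congr 2
      ext x; simp; try (intro h; linarith)
    rw [← hgv, ← hgv2]
    refine integral_mono_of_nonneg (ae_of_all _ fun x => ?_) ?_
      ((ae_restrict_iff' measurableSet_Ioi).2 (ae_of_all _ fun x hx => ?_))
    · have := (htr x).2
      have : 0 ≤ x ^ 2 - trf x := by linarith
      show 0 ≤ f x
      simp only [hf]; positivity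
    · exact ((integrable_indicator_iff measurableSet_Ioi).2 hgi).integrableOn
    · show f x ≤ (Ioi (1:ℝ)).indicator g x
      have hx : 0 < x := hx
      have he := Real.exp_pos (-x ^ 2 / (2 * τ))
      simp only [hf, hg, trf]
      by_cases h1 : 1 < x
      · rw [indicator_of_notMem (by
          intro h; have h : |x| ≤ 1 := h; rw [abs_of_pos hx] at h; linarith),
          indicator_of_mem (by exact h1)]
        have : x ^ 2 - 0 ≤ 2 * (x ^ 2 - τ) := by nlinarith
        calc _ ≤ k * Real.exp (-x ^ 2 / (2 * τ)) * (2 * (x ^ 2 - τ)) := by gcongr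
          _ = _ := by ring
      · rw [indicator_of_mem (by
          show |x| ≤ 1; rw [abs_of_pos hx]; exact not_lt.1 h1), indicator_of_notMem (by exact h1)]
        simp
  have hkt : k * τ ≤ √τ := by
    have h1 : √τ ≤ √(2 * π * τ) := Real.sqrt_le_sqrt (by nlinarith)
    have h2 : 0 < √τ := Real.sqrt_pos.2 hτ
    have h3 : √τ * √τ = τ := Real.mul_self_sqrt hτ.le
    rw [hk, inv_mul_le_iff₀ (by positivity)]
    nlinarith
  rw [hd, hd2]
  calc 2 * ∫ x in Ioi (0:ℝ), f x ≤ 2 * (2 * k * (τ * Real.exp (-(1 / (2 * τ))))) := by gcongr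
    _ = 4 * ((k * τ) * Real.exp (-(1 / (2 * τ)))) := by ring
    _ ≤ _ := by gcongr

end TSM

namespace TSM
open Complex (I)

lemma gamma_neg_pos {Y : ℝ} (hY1 : 1 < Y) (hY2 : Y < 2) : 0 < Real.Gamma (-Y) := by
  have h1 : Real.Gamma (-Y + 1) = -Y * Real.Gamma (-Y) := Real.Gamma_add_one (by linarith)
  have h2 : Real.Gamma (-Y + 1 + 1) = (-Y + 1) * Real.Gamma (-Y + 1) :=
    Real.Gamma_add_one (by linarith)
  have h3 : 0 < Real.Gamma (-Y + 1 + 1) := Real.Gamma_pos_of_pos (by linarith)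
  rw [h2, h1] at h3
  have h4 : 0 < (Y - 1) * Y := mul_pos (by linarith) (by linarith)
  have h5 : 0 < (Y - 1) * Y * Real.Gamma (-Y) := by nlinarith
  exact (mul_pos_iff_of_pos_left h4).1 h5

lemma cos_neg {Y : ℝ} (hY1 : 1 < Y) (hY2 : Y < 2) : Real.cos (π * Y / 2) < 0 := by
  have := Real.pi_pos
  apply Real.cos_neg_of_pi_div_two_lt_of_lt <;> nlinarith

lemma sin_pos {Y : ℝ} (hY1 : 1 < Y) (hY2 : Y < 2) : 0 < Real.sin (π * Y / 2) := by
  have := Real.pi_pos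
  apply Real.sin_pos_of_pos_of_lt_pi <;> nlinarith

lemma const_id {Y Cp Cm : ℝ} (hY1 : 1 < Y) (hY2 : Y < 2) :
    2 * ((Cp + Cm) * Real.Gamma (-Y) * |Real.cos (π * Y / 2)|) / π *
      (Real.Gamma (Y + 1) * Real.sin (π * Y / 2)) = Cp + Cm := by
  have hc := cos_neg hY1 hY2
  have hs := sin_pos hY1 hY2
  have hr := Real.Gamma_mul_Gamma_one_sub (-Y)
  have e1 : (1 - -Y) = Y + 1 := by ring
  have e2 : Real.sin (π * -Y) = -(2 * Real.sin (π * Y / 2) * Real.cos (π * Y / 2)) := by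
    rw [← Real.sin_two_mul, ← Real.sin_neg]; congr 1; ring
  rw [e1, e2] at hr
  rw [abs_of_neg hc]
  set C := Real.cos (π * Y / 2)
  set S := Real.sin (π * Y / 2)
  have hpi := Real.pi_ne_zero
  calc _ = (Cp + Cm) * (Real.Gamma (-Y) * Real.Gamma (Y + 1)) * (-(2 * S * C)) / π := by ring
    _ = _ := by
      rw [hr]
      have : C ≠ 0 := hc.ne
      have : S ≠ 0 := hs.ne'
      field_simp

/-- `ς^Y` -/
def aY (Y Cp Cm : ℝ) : ℝ := (Cp + Cm) * Real.Gamma (-Y) * |Real.cos (π * Y / 2)|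

lemma aY_pos {Y Cp Cm : ℝ} (hY1 : 1 < Y) (hY2 : Y < 2) (hCp : 0 < Cp) (hCm : 0 < Cm) :
    0 < aY Y Cp Cm := by
  have h1 := gamma_neg_pos hY1 hY2
  have h2 := abs_pos.2 (cos_neg hY1 hY2).ne
  unfold aY; positivity

lemma varsigma_pow {Y Cp Cm : ℝ} (hY1 : 1 < Y) (hY2 : Y < 2) (hCp : 0 < Cp) (hCm : 0 < Cm) :
    varsigma Y Cp Cm ^ Y = aY Y Cp Cm := by
  have h := aY_pos hY1 hY2 hCp hCm
  unfold varsigma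
  rw [← Real.rpow_mul (by unfold aY at h; exact h.le), one_div_mul_cancel (by linarith),
    Real.rpow_one, aY]

def bY (Y Cp Cm : ℝ) : ℝ := (Cp - Cm) / (Cp + Cm) * Real.tan (π * Y / 2)

def cY (Y Cp Cm : ℝ) : ℂ := ⟨aY Y Cp Cm, -(aY Y Cp Cm * bY Y Cp Cm)⟩

lemma stablePart_eq {Y Cp Cm : ℝ} (hY1 : 1 < Y) (hY2 : Y < 2) (hCp : 0 < Cp) (hCm : 0 < Cm)
    (u : ℝ) : stablePart Y Cp Cm u =
      ⟨aY Y Cp Cm * |u| ^ Y, -(aY Y Cp Cm * |u| ^ Y * (Real.sign u * bY Y Cp Cm))⟩ := by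
  unfold stablePart
  rw [varsigma_pow hY1 hY2 hCp hCm]
  have : (1 - Complex.I * ((Cp - Cm) / (Cp + Cm)) * Real.sign u * Real.tan (π * Y / 2) : ℂ) =
      1 - ((Real.sign u * bY Y Cp Cm : ℝ) : ℂ) * I := by
    unfold bY; push_cast; ring
  rw [this]
  apply Complex.ext
  · rw [Complex.re_ofReal_mul]; simp
  · rw [Complex.im_ofReal_mul]; simp

lemma stablePart_scale {Y Cp Cm : ℝ} (hY1 : 1 < Y) (hY2 : Y < 2) (hCp : 0 < Cp) (hCm : 0 < Cm)
    {e : ℝ} (he : 0 < e) (u : ℝ) :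
    stablePart Y Cp Cm (e⁻¹ * u) = ((e ^ (-Y) : ℝ) : ℂ) * stablePart Y Cp Cm u := by
  have h1 : |e⁻¹ * u| ^ Y = e ^ (-Y) * |u| ^ Y := by
    rw [abs_mul, abs_of_pos (inv_pos.2 he), Real.mul_rpow (by positivity) (by positivity),
      Real.inv_rpow he.le, Real.rpow_neg he.le]
  have h2 : Real.sign (e⁻¹ * u) = Real.sign u := by
    have hp : 0 < e⁻¹ := inv_pos.2 he
    rcases lt_trichotomy u 0 with h | h | h
    · rw [Real.sign_of_neg h, Real.sign_of_neg (by nlinarith)]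
    · simp [h]
    · rw [Real.sign_of_pos h, Real.sign_of_pos (by positivity)]
  rw [stablePart_eq hY1 hY2 hCp hCm, stablePart_eq hY1 hY2 hCp hCm, h1, h2]
  apply Complex.ext
  · rw [Complex.re_ofReal_mul]; ring
  · rw [Complex.im_ofReal_mul]; ring

lemma exp_stable_re {Y Cp Cm : ℝ} (hY1 : 1 < Y) (hY2 : Y < 2) (hCp : 0 < Cp) (hCm : 0 < Cm)
    (l u : ℝ) : (Complex.exp (-(l * stablePart Y Cp Cm u))).re =
      (Complex.exp (-(l * (cY Y Cp Cm * (|u| ^ Y : ℝ))))).re := by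
  rw [stablePart_eq hY1 hY2 hCp hCm, Complex.exp_re, Complex.exp_re]
  simp only [cY, Complex.neg_re, Complex.neg_im, Complex.re_ofReal_mul, Complex.im_ofReal_mul,
    Complex.re_mul_ofReal, Complex.im_mul_ofReal]
  congr 1
  rcases lt_trichotomy u 0 with h | h | h
  · rw [Real.sign_of_neg h, ← Real.cos_neg]; congr 1; ring
  · simp [h, Real.zero_rpow (show Y ≠ 0 by linarith)]
  · rw [Real.sign_of_pos h]; congr 1; ring

/-- The scaled expansion. -/
lemma scaled {Y Cp Cm σ : ℝ} (hY1 : 1 < Y) (hY2 : Y < 2) (hCp : 0 < Cp) (hCm : 0 < Cm)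
    (hσ : 0 < σ) : ∃ K, 0 ≤ K ∧ ∀ (μ : Measure ℝ) (_ : IsProbabilityMeasure μ) (h e : ℝ), 0 < h →
      0 < e → (∀ u : ℝ, ∫ x, Complex.exp (Complex.I * u * x) ∂μ = tildeCF σ Y Cp Cm h u) →
      |(∫ x, Set.indicator {x : ℝ | |x| ≤ e} (fun x => x ^ 2) x ∂μ)
        - e ^ 2 * ∫ x, trf x ∂(gaussianReal 0 (σ ^ 2 * h / e ^ 2).toNNReal)
        - Afun Y Cp Cm σ e h * h| ≤ K * (h ^ 3 * e ^ (-Y - 2) + h ^ 2 * e ^ (2 - 2 * Y)) := by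
  have hcre : (cY Y Cp Cm).re = aY Y Cp Cm := rfl
  obtain ⟨K, hK, H⟩ := core (c := cY Y Cp Cm) hY1 hY2 (by rw [hcre]; exact aY_pos hY1 hY2 hCp hCm)
  refine ⟨K * (σ ^ 4 + 1), by positivity, fun μ hμ h e hh he hcf => ?_⟩
  set τ := σ ^ 2 * h / e ^ 2 with hτ
  set l := h * e ^ (-Y) with hl
  have hτ0 : 0 < τ := by positivity
  have hl0 : 0 < l := by positivity
  set ν := μ.map (fun x => e⁻¹ * x) with hν
  have hνp : IsProbabilityMeasure ν := Measure.isProbabilityMeasure_map (by fun_prop)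
  have hcharμ : ∀ u, charFun μ u = tildeCF σ Y Cp Cm h u := by
    intro u
    rw [charFun_apply_real, ← hcf u]
    congr 1; ext x; congr 1; ring
  have hchar : ∀ u, charFun ν u = ((Real.exp (-(τ / 2 * u ^ 2)) : ℝ) : ℂ) *
      Complex.exp (-(l * stablePart Y Cp Cm u)) := by
    intro u
    rw [hν, charFun_map_mul, hcharμ, tildeCF, stablePart_scale hY1 hY2 hCp hCm he,
      Complex.ofReal_exp, ← Complex.exp_add]
    congr 1
    rw [hτ, hl]; push_cast
    have : (e:ℂ) ≠ 0 := by exact_mod_cast he.ne'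
    field_simp; ring
  have hd := trunc_diff ν hτ0 (c := cY Y Cp Cm) (Y := Y) (l := l) (fun u => by
      rw [hchar, norm_mul, Complex.norm_real, Real.norm_eq_abs, abs_of_pos (Real.exp_pos _),
        Complex.norm_exp, stablePart_eq hY1 hY2 hCp hCm, Complex.neg_re, Complex.re_ofReal_mul]
      have h1 := aY_pos hY1 hY2 hCp hCm
      have h2 : Real.exp (-(l * (aY Y Cp Cm * |u| ^ Y))) ≤ 1 := by
        rw [Real.exp_le_one_iff, neg_nonpos]; positivity
      have h3 : -(τ / 2 * u ^ 2) = -(τ / 2) * u ^ 2 := by ring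
      rw [h3]
      exact mul_le_of_le_one_right (Real.exp_pos _).le h2)
    (fun u => by
      rw [hchar, Complex.re_ofReal_mul, exp_stable_re hY1 hY2 hCp hCm, sq_abs])
  have hC := H τ l hτ0 hl0
  rw [← hd, hcre, aY, const_id hY1 hY2] at hC
  have hLHS : ∫ x, Set.indicator {x : ℝ | |x| ≤ e} (fun x => x ^ 2) x ∂μ =
      e ^ 2 * ∫ x, trf x ∂ν := by
    rw [hν, integral_map (by fun_prop) trf_measurable.aestronglyMeasurable, ← integral_const_mul]
    congr 1; ext x
    have hiff : |e⁻¹ * x| ≤ 1 ↔ |x| ≤ e := by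
      rw [abs_mul, abs_of_pos (inv_pos.2 he), inv_mul_le_iff₀ he, mul_one]
    unfold trf
    by_cases hx : |x| ≤ e
    · rw [indicator_of_mem (by exact hx), indicator_of_mem (by exact hiff.2 hx)]
      field_simp
    · rw [indicator_of_notMem (by exact hx), indicator_of_notMem (by intro h'; exact hx (hiff.1 h'))]
      simp
  have p1 : e ^ (2 - Y) = e ^ 2 * e ^ (-Y) := by
    rw [← Real.rpow_natCast, ← Real.rpow_add he]; congr 1
  have p2 : e ^ (-Y - 2) = e ^ (-Y) / e ^ 2 := by
    rw [← Real.rpow_natCast, ← Real.rpow_sub he]; congr 1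
  have p3 : e ^ (2 - 2 * Y) = e ^ 2 * (e ^ (-Y)) ^ 2 := by
    rw [← Real.rpow_natCast, ← Real.rpow_natCast, ← Real.rpow_mul he.le, ← Real.rpow_add he]
    congr 1; push_cast; ring
  have hY0 : Y ≠ 0 := by linarith
  have h2Y : 2 - Y ≠ 0 := by linarith
  have hA : Afun Y Cp Cm σ e h * h = e ^ 2 * (l * (Cp + Cm) *
      (1 / (2 - Y) - τ * ((Y + 1) * (Y + 2) / (2 * Y)))) := by
    rw [Afun, p1, hl, hτ]; field_simp
  rw [hLHS, hA, ← mul_sub, ← mul_sub, abs_mul, abs_of_pos (by positivity : 0 < e ^ 2)]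
  calc _ ≤ e ^ 2 * (K * (l * τ ^ 2 + l ^ 2)) := by gcongr
    _ = K * (σ ^ 4 * (h ^ 3 * e ^ (-Y - 2)) + h ^ 2 * e ^ (2 - 2 * Y)) := by
      rw [p2, p3, hl, hτ]; field_simp
    _ ≤ _ := by
      rw [mul_assoc]
      have q1 : 0 ≤ h ^ 3 * e ^ (-Y - 2) := by positivity
      have q2 : 0 ≤ h ^ 2 * e ^ (2 - 2 * Y) := by positivity
      gcongr
      have : 0 ≤ σ ^ 4 := by positivity
      nlinarith

end TSM

/-- Proposition B.1: small-time expansion of the truncated second moment of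
`X̃_h`: `E(X̃_h² 1_{|X̃_h| ≤ ε}) = σ²h + A(ε,h)h + R(h)` with `R` a sum of four explicit
big-O remainders. -/
theorem truncated_second_moment_stable
    (Y Cp Cm σ : ℝ)
    (hY1 : 1 < Y) (hY2 : Y < 2) (hCp : 0 < Cp) (hCm : 0 < Cm) (hσ : 0 < σ)
    -- the law `μtilde h` of `X̃_h`
    (μtilde : ℝ → Measure ℝ)
    (hμt : ∀ h : ℝ, 0 < h → IsProbabilityMeasure (μtilde h))
    (hμtcf : ∀ h : ℝ, 0 < h → ∀ u : ℝ,
      ∫ x, Complex.exp (Complex.I * u * x) ∂(μtilde h) = tildeCF σ Y Cp Cm h u)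
    -- the threshold `ε = ε(h)`
    (ε : ℝ → ℝ) (hεpos : ∀ h : ℝ, 0 < h → 0 < ε h)
    (hε0 : Tendsto ε (𝓝[>] (0 : ℝ)) (𝓝 0))
    (hεsqrt : Tendsto (fun h => ε h / Real.sqrt h) (𝓝[>] (0 : ℝ)) atTop) :
    ∃ R₁ R₂ R₃ R₄ : ℝ → ℝ,
      (∀ h : ℝ, 0 < h →
        (∫ x, Set.indicator {x : ℝ | |x| ≤ ε h} (fun x => x ^ 2) x ∂(μtilde h))
          = σ ^ 2 * h + Afun Y Cp Cm σ (ε h) h * h + R₁ h + R₂ h + R₃ h + R₄ h) ∧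
      R₁ =O[𝓝[>] (0 : ℝ)] (fun h => h ^ 3 * ε h ^ (-Y - 2)) ∧
      R₂ =O[𝓝[>] (0 : ℝ)] (fun h => h ^ 2 * ε h ^ (2 - 2 * Y)) ∧
      R₃ =O[𝓝[>] (0 : ℝ)]
        (fun h => Real.sqrt h * ε h * Real.exp (-(ε h ^ 2) / (2 * σ ^ 2 * h))) ∧
      R₄ =O[𝓝[>] (0 : ℝ)]
        (fun h => Real.sqrt h * ε h ^ (3 - Y) * Real.exp (-(ε h ^ 2) / (8 * σ ^ 2 * h))) := by
  obtain ⟨K, hK, H⟩ := TSM.scaled hY1 hY2 hCp hCm hσ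
  set A₁ : ℝ → ℝ := fun h => h ^ 3 * ε h ^ (-Y - 2) with hA₁
  set A₂ : ℝ → ℝ := fun h => h ^ 2 * ε h ^ (2 - 2 * Y) with hA₂
  set G : ℝ → ℝ := fun h => ε h ^ 2 *
    ∫ x, TSM.trf x ∂(gaussianReal 0 (σ ^ 2 * h / ε h ^ 2).toNNReal) with hG
  set D : ℝ → ℝ := fun h => (∫ x, Set.indicator {x : ℝ | |x| ≤ ε h} (fun x => x ^ 2) x ∂(μtilde h))
    - G h - Afun Y Cp Cm σ (ε h) h * h with hD
  have hp1 : ∀ h, 0 < h → 0 < A₁ h := fun h hh => by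
    have := hεpos h hh
    simp only [hA₁]; positivity
  have hp2 : ∀ h, 0 < h → 0 < A₂ h := fun h hh => by
    have := hεpos h hh
    simp only [hA₂]; positivity
  have hDb : ∀ h, 0 < h → |D h| ≤ K * (A₁ h + A₂ h) := fun h hh =>
    H (μtilde h) (hμt h hh) h (ε h) hh (hεpos h hh) (hμtcf h hh)
  refine ⟨fun h => D h * (A₁ h / (A₁ h + A₂ h)), fun h => D h * (A₂ h / (A₁ h + A₂ h)),
    fun h => G h - σ ^ 2 * h, fun _ => 0, ?_, ?_, ?_, ?_, isBigO_zero _ _⟩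
  · intro h hh
    have h1 := hp1 h hh
    have h2 := hp2 h hh
    have h3 : D h * (A₁ h / (A₁ h + A₂ h)) + D h * (A₂ h / (A₁ h + A₂ h)) = D h := by
      field_simp
    simp only [hD] at h3 ⊢
    linarith
  · refine IsBigO.of_bound K ?_
    filter_upwards [self_mem_nhdsWithin] with h hh
    have h1 := hp1 h hh
    have h2 := hp2 h hh
    have h3 := hDb h hh
    rw [Real.norm_eq_abs, abs_mul, abs_of_pos (by positivity : 0 < A₁ h / (A₁ h + A₂ h)),
      Real.norm_eq_abs, abs_of_pos h1]
    calc _ ≤ K * (A₁ h + A₂ h) * (A₁ h / (A₁ h + A₂ h)) := by gcongr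
      _ = _ := by field_simp
  · refine IsBigO.of_bound K ?_
    filter_upwards [self_mem_nhdsWithin] with h hh
    have h1 := hp1 h hh
    have h2 := hp2 h hh
    have h3 := hDb h hh
    rw [Real.norm_eq_abs, abs_mul, abs_of_pos (by positivity : 0 < A₂ h / (A₁ h + A₂ h)),
      Real.norm_eq_abs, abs_of_pos h2]
    calc _ ≤ K * (A₁ h + A₂ h) * (A₂ h / (A₁ h + A₂ h)) := by gcongr
      _ = _ := by field_simp
  · refine IsBigO.of_bound (4 * σ) ?_
    filter_upwards [self_mem_nhdsWithin, hεsqrt.eventually_ge_atTop (2 * σ)] with h hh hr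
    have hh : 0 < h := hh
    have he := hεpos h hh
    set e := ε h
    have hs : 0 < √h := Real.sqrt_pos.2 hh
    have hs2 : √h * √h = h := Real.mul_self_sqrt hh.le
    have hr2 : 2 * σ * √h ≤ e := by rwa [le_div_iff₀ hs] at hr
    have hτ0 : 0 < σ ^ 2 * h / e ^ 2 := by positivity
    have hτ2 : σ ^ 2 * h / e ^ 2 ≤ 1 / 2 := by
      rw [div_le_iff₀ (by positivity)]
      have : (2 * σ * √h) ^ 2 ≤ e ^ 2 := by gcongr
      have h5 : (2 * σ * √h) ^ 2 = 4 * (σ ^ 2 * h) := by rw [mul_pow, sq √h, hs2]; ring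
      nlinarith [mul_pos (pow_pos hσ 2) hh]
    have hb := TSM.gauss_tail hτ0 hτ2
    have e1 : G h - σ ^ 2 * h = e ^ 2 * (∫ x, TSM.trf x ∂(gaussianReal 0
        (σ ^ 2 * h / e ^ 2).toNNReal) - σ ^ 2 * h / e ^ 2) := by
      simp only [hG]
      rw [mul_sub, mul_div_cancel₀ _ (by positivity : e ^ 2 ≠ 0)]
    have e2 : √(σ ^ 2 * h / e ^ 2) = σ * √h / e := by
      rw [Real.sqrt_div (by positivity), Real.sqrt_mul (by positivity), Real.sqrt_sq hσ.le,
        Real.sqrt_sq he.le]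
    have e3 : -(1 / (2 * (σ ^ 2 * h / e ^ 2))) = -(e ^ 2) / (2 * σ ^ 2 * h) := by
      field_simp
    rw [e2, e3] at hb
    rw [Real.norm_eq_abs, e1, abs_mul, abs_of_pos (by positivity : 0 < e ^ 2), Real.norm_eq_abs,
      abs_of_pos (by positivity : 0 < √h * e * Real.exp (-(e ^ 2) / (2 * σ ^ 2 * h)))]
    calc _ ≤ e ^ 2 * (4 * (σ * √h / e * Real.exp (-(e ^ 2) / (2 * σ ^ 2 * h)))) := by gcongr
      _ = _ := by field_simp

end
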